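/- arXiv:2406.02375 — 7 statements merged into one kernel-verified Lean document; each statement's English description precedes it below -/
import Mathlib

section
/- Let A ⊆ B be a strictly separable ring extension. Then for every left B-module M, the projective dimension of M as a B-module equals the projective dimension of M as an A-module (via restriction of scalars): pd_B(M) = pd_A(M). -/
/-!
Statement 0: If `A ⊆ B` is a strictly separable ring extension, then for every left
`B`-module `M` one has `pd_B(M) = pd_A(M)` (where `M` is an `A`-module via restriction
of scalars).
-/

universe u

open TensorProduct

/-- `pdLE R n M` means that the left `R`-module `M` has projective dimension `≤ n`:
for `n = 0` this says that `M` is projective, and for `n+1` that `M` admits an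
epimorphism from a projective module whose kernel has projective dimension `≤ n`. -/
def pdLE (R : Type u) [Ring R] : ℕ → (M : Type u) → [AddCommGroup M] → [Module R M] → Prop
  | 0, M, _, _ => Module.Projective R M
  | n + 1, M, _, _ => ∃ (P : Type u) (_ : AddCommGroup P) (_ : Module R P) (g : P →ₗ[R] M),
      Module.Projective R P ∧ Function.Surjective g ∧ pdLE R n ↥(LinearMap.ker g)

/-- The projective dimension (in `ℕ∞`, with `⊤` meaning infinite projective dimension)
of a left `R`-module `M`. -/
noncomputable def projDim (R : Type u) [Ring R] (M : Type u) [AddCommGroup M]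
    [Module R M] : ℕ∞ :=
  sInf {d : ℕ∞ | ∃ n : ℕ, d = n ∧ pdLE R n M}

/-- The subgroup of `B ⊗_ℤ B` generated by the `A`-balancing relations; the quotient
of `B ⊗_ℤ B` by this subgroup is the tensor product `B ⊗_A B` (for the right/left
`A`-module structures on `B` induced by `f : A →+* B`). -/
noncomputable def balancedRel {A B : Type*} [Ring A] [Ring B] (f : A →+* B) :
    AddSubgroup (TensorProduct ℤ B B) :=
  AddSubgroup.closure
    {x | ∃ (b : B) (a : A) (b' : B), x = (b * f a) ⊗ₜ[ℤ] b' - b ⊗ₜ[ℤ] (f a * b')}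

/-- `B` is flat as a right `A`-module (via `f : A →+* B`), expressed by the standard
equational criterion for flatness (valid over arbitrary rings). -/
def RightFlat {A B : Type*} [Ring A] [Ring B] (f : A →+* B) : Prop :=
  ∀ (n : ℕ) (x : Fin n → B) (a : Fin n → A), (∑ i, x i * f (a i)) = 0 →
    ∃ (k : ℕ) (y : Fin k → B) (c : Fin k → Fin n → A),
      (∀ i, x i = ∑ j, y j * f (c j i)) ∧ ∀ j, (∑ i, c j i * a i) = 0

/-- A ring extension `f : A →+* B` is *strictly separable* if
(1) the multiplication map `B ⊗_A B → B` is a split epimorphism of `B`-bimodules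
    (equivalently, there is `w ∈ B ⊗_A B` with `μ(w) = 1` and `b·w = w·b` for all `b`;
    here elements of `B ⊗_A B` are represented by elements of `B ⊗_ℤ B` modulo
    `balancedRel f`),
(2) the inclusion `A → B` is a split monomorphism of `A`-bimodules, and
(3) `B` is projective as a left `A`-module and flat as a right `A`-module. -/
def StrictlySeparable {A B : Type*} [Ring A] [Ring B] (f : A →+* B) : Prop :=
  (∃ w : TensorProduct ℤ B B, LinearMap.mul' ℤ B w = 1 ∧ ∀ b : B,
      TensorProduct.map (LinearMap.mulLeft ℤ b) (LinearMap.id : B →ₗ[ℤ] B) w -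
        TensorProduct.map (LinearMap.id : B →ₗ[ℤ] B) (LinearMap.mulRight ℤ b) w
        ∈ balancedRel f) ∧
  (∃ π : B →+ A, (∀ a, π (f a) = a) ∧ (∀ (a : A) (b : B), π (f a * b) = a * π b) ∧
      (∀ (a : A) (b : B), π (b * f a) = π b * a)) ∧
  (letI : Module A B := Module.compHom B f; Module.Projective A B) ∧
  RightFlat f

/-!
Projectivity passes from `B` to `A` because `B` is `A`-projective, and from `A` to `B` because
averaging an `A`-linear section `s` over the separability element `∑ xᵢ ⊗ yᵢ`, that is, replacing
it by `m ↦ ∑ xᵢ • s (yᵢ • m)`, gives a `B`-linear section. For higher projective dimension, resolve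
`M` by the free `B`-module on `M`: it is projective over both rings, so over both rings the
dimension drops by one on passing to the same kernel.
-/

section ProjectiveDimension

open CategoryTheory

variable {R : Type u} [Ring R] {M P : Type u} [AddCommGroup M] [Module R M]
  [AddCommGroup P] [Module R P]

theorem hasProjectiveDimensionLE_succ_iff_ker [Module.Projective R P] {g : P →ₗ[R] M}
    (hg : Function.Surjective g) (n : ℕ) :
    HasProjectiveDimensionLE (ModuleCat.of R M) (n + 1) ↔
      HasProjectiveDimensionLE (ModuleCat.of R (LinearMap.ker g)) n :=
  (LinearMap.shortExact_shortComplexKer hg).hasProjectiveDimensionLT_X₃_iff n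
    ((IsProjective.iff_projective P).mp inferInstance)

theorem pdLE_iff_hasProjectiveDimensionLE (n : ℕ) (M : Type u) [AddCommGroup M] [Module R M] :
    pdLE R n M ↔ HasProjectiveDimensionLE (ModuleCat.of R M) n := by
  induction n generalizing M with
  | zero =>
    rw [pdLE, IsProjective.iff_projective, projective_iff_hasProjectiveDimensionLE_zero]
  | succ n ih =>
    rw [pdLE]
    constructor
    · rintro ⟨P, _, _, g, _, hg, hker⟩
      exact (hasProjectiveDimensionLE_succ_iff_ker hg n).mpr ((ih _).mp hker)
    · intro hM
      have hg := Finsupp.linearCombination_id_surjective R M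
      exact ⟨M →₀ R, inferInstance, inferInstance, Finsupp.linearCombination R id, inferInstance,
        hg, (ih _).mpr ((hasProjectiveDimensionLE_succ_iff_ker hg n).mp hM)⟩

theorem pdLE_succ_iff_ker [Module.Projective R P] {g : P →ₗ[R] M}
    (hg : Function.Surjective g) (n : ℕ) :
    pdLE R (n + 1) M ↔ pdLE R n (LinearMap.ker g) := by
  rw [pdLE_iff_hasProjectiveDimensionLE, pdLE_iff_hasProjectiveDimensionLE,
    hasProjectiveDimensionLE_succ_iff_ker hg]

end ProjectiveDimension

theorem projective_restrictScalars (A B P : Type*) [Semiring A] [Semiring B] [AddCommMonoid P]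
    [Module A B] [Module B P] [Module A P] [IsScalarTower A B B] [IsScalarTower A B P]
    [Module.Projective A B] [Module.Projective B P] : Module.Projective A P := by
  classical
  obtain ⟨s, hs⟩ := Module.projective_def'.mp ‹Module.Projective B P›
  have : Module.Projective A (P →₀ B) := .of_equiv (finsuppLequivDFinsupp A).symm
  refine .of_split (s.restrictScalars A)
    ((Finsupp.linearCombination B id).restrictScalars A) ?_
  ext m
  exact LinearMap.congr_fun hs m

/-- A separability element of the ring extension `f : A →+* B`: an element of `B ⊗_A B` that
multiplies to `1` and commutes with `B`. Giving one is the same as giving a `B`-bimodule section of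
the multiplication map `B ⊗_A B → B`. It is represented by an element of `B ⊗_ℤ B`, with
commutation required modulo `balancedRel f`. -/
structure IsSeparabilityElement {A B : Type*} [Ring A] [Ring B] (f : A →+* B) (w : B ⊗[ℤ] B) :
    Prop where
  mul'_eq_one : LinearMap.mul' ℤ B w = 1
  mulLeft_sub_mulRight_mem (b : B) :
    TensorProduct.map (LinearMap.mulLeft ℤ b) LinearMap.id w -
      TensorProduct.map LinearMap.id (LinearMap.mulRight ℤ b) w ∈ balancedRel f

section Sandwich

variable {A B P Q : Type*} [Ring A] [Ring B] [AddCommGroup P] [AddCommGroup Q]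
  [Module B P] [Module B Q]

/-- The action of `B ⊗_ℤ B` on additive maps between `B`-modules, `x ⊗ y` sending `s` to
`m ↦ x • s (y • m)`. Acting by a separability element turns `A`-linear maps into `B`-linear
ones. -/
noncomputable def sandwich (s : P →ₗ[ℤ] Q) : B ⊗[ℤ] B →ₗ[ℤ] P →ₗ[ℤ] Q :=
  TensorProduct.lift <| (LinearMap.llcomp ℤ P Q Q).compl₁₂ (Algebra.lsmul ℤ ℤ Q).toLinearMap
    (LinearMap.llcomp ℤ P P Q s ∘ₗ (Algebra.lsmul ℤ ℤ P).toLinearMap)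

@[simp]
theorem sandwich_tmul_apply (s : P →ₗ[ℤ] Q) (x y : B) (m : P) :
    sandwich s (x ⊗ₜ y) m = x • s (y • m) :=
  rfl

theorem sandwich_mulLeft_apply (s : P →ₗ[ℤ] Q) (b : B) (t : B ⊗[ℤ] B) (m : P) :
    sandwich s (TensorProduct.map (LinearMap.mulLeft ℤ b) LinearMap.id t) m =
      b • sandwich s t m := by
  induction t with
  | zero => simp
  | tmul x y => simp [mul_smul]
  | add t t' ht ht' => simp [ht, ht']

theorem sandwich_mulRight_apply (s : P →ₗ[ℤ] Q) (b : B) (t : B ⊗[ℤ] B) (m : P) :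
    sandwich s (TensorProduct.map LinearMap.id (LinearMap.mulRight ℤ b) t) m =
      sandwich s t (b • m) := by
  induction t with
  | zero => simp
  | tmul x y => simp [mul_smul]
  | add t t' ht ht' => simp [ht, ht']

theorem apply_sandwich_of_leftInverse {s : P →ₗ[ℤ] Q} {g : Q →ₗ[B] P}
    (hs : Function.LeftInverse g s) (t : B ⊗[ℤ] B) (m : P) :
    g (sandwich s t m) = LinearMap.mul' ℤ B t • m := by
  induction t with
  | zero => simp
  | tmul x y => simp [hs (y • m), mul_smul]
  | add t t' ht ht' => simp [ht, ht', add_smul]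

variable [Module A B] [Module A P] [Module A Q] [IsScalarTower A B B] [IsScalarTower A B P]
  [IsScalarTower A B Q]

theorem sandwich_eq_zero_of_mem_balancedRel (s : P →ₗ[A] Q) {t : B ⊗[ℤ] B}
    (ht : t ∈ balancedRel (RingHom.smulOneHom : A →+* B)) :
    sandwich (s.restrictScalars ℤ) t = 0 := by
  suffices balancedRel (RingHom.smulOneHom : A →+* B) ≤
      (sandwich (s.restrictScalars ℤ)).toAddMonoidHom.ker from this ht
  refine (AddSubgroup.closure_le _).mpr ?_
  rintro _ ⟨b, a, b', rfl⟩
  ext m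
  simp [mul_smul]

theorem IsSeparabilityElement.sandwich_smul {w : B ⊗[ℤ] B}
    (hw : IsSeparabilityElement (RingHom.smulOneHom : A →+* B) w) (s : P →ₗ[A] Q) (b : B) (m : P) :
    sandwich (s.restrictScalars ℤ) w (b • m) = b • sandwich (s.restrictScalars ℤ) w m := by
  have hzero := LinearMap.congr_fun
    (sandwich_eq_zero_of_mem_balancedRel s (hw.mulLeft_sub_mulRight_mem b)) m
  rw [map_sub, LinearMap.sub_apply, sandwich_mulLeft_apply, sandwich_mulRight_apply] at hzero
  exact (sub_eq_zero.mp hzero).symm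

theorem IsSeparabilityElement.exists_section_of_leftInverse {w : B ⊗[ℤ] B}
    (hw : IsSeparabilityElement (RingHom.smulOneHom : A →+* B) w)
    {g : Q →ₗ[B] P} {s : P →ₗ[A] Q} (hs : Function.LeftInverse g s) :
    ∃ s' : P →ₗ[B] Q, g ∘ₗ s' = LinearMap.id := by
  refine ⟨{ sandwich (s.restrictScalars ℤ) w with map_smul' := hw.sandwich_smul s }, ?_⟩
  ext m
  calc g (sandwich (s.restrictScalars ℤ) w m)
      = LinearMap.mul' ℤ B w • m := apply_sandwich_of_leftInverse hs w m
    _ = m := by rw [hw.mul'_eq_one, one_smul]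

theorem IsSeparabilityElement.projective_of_restrictScalars {w : B ⊗[ℤ] B}
    (hw : IsSeparabilityElement (RingHom.smulOneHom : A →+* B) w)
    (P : Type*) [AddCommGroup P] [Module B P] [Module A P] [IsScalarTower A B P]
    [Module.Projective A P] :
    Module.Projective B P := by
  let g := Finsupp.linearCombination B (id : P → P)
  have hg : Function.Surjective g := Finsupp.linearCombination_id_surjective B P
  obtain ⟨s, hs⟩ := Module.projective_lifting_property (g.restrictScalars A) LinearMap.id hg
  have hgs : Function.LeftInverse g s := LinearMap.congr_fun hs
  obtain ⟨s', hs'⟩ := hw.exists_section_of_leftInverse hgs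
  exact .of_split s' g hs'

end Sandwich

theorem IsSeparabilityElement.pdLE_iff_restrictScalars {A B : Type u} [Ring A] [Ring B]
    [Module A B] [IsScalarTower A B B] [Module.Projective A B] {w : B ⊗[ℤ] B}
    (hw : IsSeparabilityElement (RingHom.smulOneHom : A →+* B) w) (n : ℕ) (M : Type u)
    [AddCommGroup M] [Module B M] [Module A M] [IsScalarTower A B M] :
    pdLE B n M ↔ pdLE A n M := by
  induction n generalizing M with
  | zero =>
    exact ⟨fun (_ : Module.Projective B M) => projective_restrictScalars A B M,
      fun (_ : Module.Projective A M) => hw.projective_of_restrictScalars M⟩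
  | succ n ih =>
    let g := Finsupp.linearCombination B (id : M → M)
    have hg : Function.Surjective g := Finsupp.linearCombination_id_surjective B M
    have : Module.Projective A (M →₀ B) := projective_restrictScalars A B (M →₀ B)
    calc pdLE B (n + 1) M
        ↔ pdLE B n (LinearMap.ker g) := pdLE_succ_iff_ker hg n
      _ ↔ pdLE A n (LinearMap.ker g) := ih (LinearMap.ker g)
      _ ↔ pdLE A (n + 1) M := (pdLE_succ_iff_ker (g := g.restrictScalars A) hg n).symm

theorem projDim_eq_of_strictlySeparable_general {A B : Type u} [Ring A] [Ring B] (f : A →+* B)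
    {w : B ⊗[ℤ] B} (hw : IsSeparabilityElement f w)
    (hB : letI : Module A B := Module.compHom B f; Module.Projective A B)
    (M : Type u) [AddCommGroup M] [Module B M] :
    letI : Module A M := Module.compHom M f
    projDim B M = projDim A M := by
  let _ : Module A B := Module.compHom B f
  let _ : Module A M := Module.compHom M f
  have : IsScalarTower A B B := ⟨fun a => mul_assoc (f a)⟩
  have : IsScalarTower A B M := ⟨fun a => mul_smul (f a)⟩
  have hf : RingHom.smulOneHom = f := RingHom.ext fun a => mul_one (f a)
  simp only [projDim, (hf ▸ hw).pdLE_iff_restrictScalars _ M]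

/-- For a strictly separable ring extension `A ⊆ B` and any left
`B`-module `M`, the projective dimension of `M` over `B` equals its projective
dimension over `A` (via restriction of scalars along `f`). -/
theorem projDim_eq_of_strictlySeparable {A B : Type u} [Ring A] [Ring B] (f : A →+* B)
    (hsep : StrictlySeparable f) (M : Type u) [AddCommGroup M] [Module B M] :
    letI : Module A M := Module.compHom M f
    projDim B M = projDim A M := by
  obtain ⟨⟨w, hmul, hcomm⟩, -, hB, -⟩ := hsep
  exact projDim_eq_of_strictlySeparable_general f ⟨hmul, hcomm⟩ hB M
end

section
/- Let A be a ring, G a finite group of order n acting on A via a datum (φ, ω), and suppose n is invertible in A. Let B = A[G,(φ,ω)] be the crossed product and μ : B ⊗_A B → B the multiplication map. Then the element w := n⁻¹ · Σ_{g ∈ G} ω_{g,g⁻¹}⁻¹ [g] ⊗ [g⁻¹] ∈ B ⊗_A B satisfies μ(w) = 1 and b·w = w·b for all b ∈ B. -/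
/-!
Statement 3: Let `G` be a finite group of order `n` acting on a ring `A` via a datum
`(φ, ω)`, with `n` invertible in `A`, and let `B = A[G, (φ, ω)]` be the crossed
product.  Then the element `w = n⁻¹ · Σ_g ω_{g,g⁻¹}⁻¹ [g] ⊗ [g⁻¹] ∈ B ⊗_A B`
satisfies `μ(w) = 1` and `b·w = w·b` for all `b ∈ B`.  Here `B ⊗_A B` is realized as
the quotient of `B ⊗_ℤ B` by the `A`-balancing relations, so the centrality equation
`b·w = w·b` reads: the difference of the two sides, computed in `B ⊗_ℤ B`, lies in
the subgroup of balancing relations.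
-/

universe u v w

open TensorProduct

/-- An action of a group `G` on a ring `A` via a pair `(φ, ω)` consisting of a map
`φ : G → Aut(A)` and a normed two-cocycle `ω : G × G → Aˣ`, satisfying the usual
compatibility conditions of a crossed system (Reiten–Riedtmann). -/
structure CrossedSystem (A : Type u) [Ring A] (G : Type v) [Group G] where
  /-- The action of `G` on `A` by ring automorphisms. -/
  φ : G → A ≃+* A
  /-- The system of factors (a normed two-cocycle with values in `Aˣ`). -/
  ω : G → G → Aˣ
  compat : ∀ (g₁ g₂ : G) (a : A),
    φ g₁ (φ g₂ a) = (ω g₁ g₂ : A) * φ (g₁ * g₂) a * ((ω g₁ g₂)⁻¹ : Aˣ)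
  φ_one : φ 1 = RingEquiv.refl A
  ω_one_right : ∀ g : G, ω g 1 = 1
  ω_one_left : ∀ g : G, ω 1 g = 1
  cocycle : ∀ g g' g'' : G,
    φ g (ω g' g'' : A) * (ω g (g' * g'') : A) = (ω g g' : A) * (ω (g * g') g'' : A)

/-- `IsCrossedProduct D B ι u` says that the ring `B`, together with the embedding
`ι : A →+* B` and the units `u g = [g]`, realizes the crossed product
`A[G, (φ, ω)]`: it is a free left `A`-module with basis `([g])_{g ∈ G}`, with
`[e] = 1`, `[g] · a = φ_g(a) · [g]` and `[f] · [g] = ω_{f,g} [f·g]`, which encodes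
the multiplication rule `a[f] · b[g] = a φ_f(b) ω_{f,g} [fg]`. -/
structure IsCrossedProduct {A : Type u} [Ring A] {G : Type v} [Group G] [Fintype G]
    (D : CrossedSystem A G) (B : Type w) [Ring B] (ι : A →+* B) (u : G → Bˣ) :
    Prop where
  u_one : (u 1 : B) = 1
  u_comm : ∀ (g : G) (a : A), (u g : B) * ι a = ι (D.φ g a) * u g
  u_mul : ∀ f g : G, (u f : B) * u g = ι (D.ω f g) * u (f * g)
  free : ∀ b : B, ∃! c : G → A, b = ∑ g : G, ι (c g) * u g

/-!
Since `[g][g⁻¹] = ω_{g,g⁻¹}`, the summand `ω_{g,g⁻¹}⁻¹ [g] ⊗ [g⁻¹]` is `v⁻¹ ⊗ v` for the unit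
`v = [g⁻¹]`, so that `w = n⁻¹ · Σ_g [g]⁻¹ ⊗ [g]` and `μ(w) = 1` is immediate. For centrality it
suffices by additivity to treat `b = a[k]`. Right multiplication by `b` permutes the basis up to
coefficients, `[g] b = a_g [gk]`, hence `[g]⁻¹ ⊗ [g] b = [g]⁻¹ a_g ⊗ [gk] = b [gk]⁻¹ ⊗ [gk]`, and
summing over `g` gives the claim.
-/

section Balanced

variable {A B I : Type*} [Ring A] [Ring B]

theorem tmul_sub_tmul_mem_balancedRel (f : A →+* B) (b : B) (a : A) (b' : B) :
    (b * f a) ⊗ₜ[ℤ] b' - b ⊗ₜ[ℤ] (f a * b') ∈ balancedRel f :=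
  AddSubgroup.subset_closure ⟨b, a, b', rfl⟩

/-- The commutator `b ↦ b·t - t·b` with a fixed `t ∈ B ⊗_ℤ B`, for the outer `B`-bimodule structure
of `B ⊗_ℤ B`. Bundling it as an additive map makes the `b` that centralize `t` modulo the balancing
relations a subgroup of `B`. -/
noncomputable def tensorCommutator (t : B ⊗[ℤ] B) : B →ₗ[ℤ] B ⊗[ℤ] B :=
  (LinearMap.rTensorHom B ∘ₗ LinearMap.mul ℤ B).flip t -
    (LinearMap.lTensorHom B ∘ₗ (LinearMap.mul ℤ B).flip).flip t

theorem tensorCommutator_apply (t : B ⊗[ℤ] B) (b : B) :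
    tensorCommutator t b =
      TensorProduct.map (LinearMap.mulLeft ℤ b) LinearMap.id t -
        TensorProduct.map LinearMap.id (LinearMap.mulRight ℤ b) t :=
  rfl

variable [Fintype I]

/-- The tensor `c · Σ_i (u i)⁻¹ ⊗ u i` attached to a finite family of units; for the basis of a
crossed product and `c = n⁻¹` it is the separability element. -/
noncomputable def invTensorSum (c : B) (u : I → Bˣ) : B ⊗[ℤ] B :=
  ∑ i, (c * ↑(u i)⁻¹) ⊗ₜ[ℤ] (u i : B)

theorem mul'_invTensorSum (c : B) (u : I → Bˣ) :
    LinearMap.mul' ℤ B (invTensorSum c u) = Fintype.card I * c := by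
  simp [invTensorSum]

theorem tensorCommutator_invTensorSum_mem_balancedRel (f : A →+* B) {b c : B}
    (hbc : Commute b c) (u : I → Bˣ) (σ : Equiv.Perm I) (a : I → A)
    (hub : ∀ i, (u i : B) * b = f (a i) * u (σ i)) :
    tensorCommutator (invTensorSum c u) b ∈ balancedRel f := by
  have left_factor (i : I) : b * (c * ↑(u (σ i))⁻¹) = c * ↑(u i)⁻¹ * f (a i) :=
    calc b * (c * ↑(u (σ i))⁻¹) = c * ↑(u i)⁻¹ * (u i * b) * ↑(u (σ i))⁻¹ := by
          rw [← mul_assoc, hbc.eq, mul_assoc c, mul_assoc c, Units.inv_mul_cancel_left, mul_assoc]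
      _ = c * ↑(u i)⁻¹ * f (a i) := by
          rw [hub, ← mul_assoc, Units.mul_inv_cancel_right]
  have commutator_eq : tensorCommutator (invTensorSum c u) b =
      ∑ i, ((c * ↑(u i)⁻¹ * f (a i)) ⊗ₜ[ℤ] (u (σ i) : B) -
        (c * ↑(u i)⁻¹) ⊗ₜ[ℤ] (f (a i) * u (σ i))) := by
    simp only [tensorCommutator_apply, invTensorSum, map_sum, TensorProduct.map_tmul,
      LinearMap.mulLeft_apply, LinearMap.mulRight_apply, LinearMap.id_apply,
      Finset.sum_sub_distrib, ← left_factor, ← hub]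
    rw [Equiv.sum_comp σ fun i => (b * (c * ↑(u i)⁻¹)) ⊗ₜ[ℤ] (u i : B)]
  rw [commutator_eq]
  exact sum_mem fun i _ => tmul_sub_tmul_mem_balancedRel f _ _ _

end Balanced

section CrossedRelations

variable {A B G : Type*} [Ring A] [Ring B] [Group G] {ι : A →+* B} {φ : G → A → A}
  {ω : G → G → Aˣ} {u : G → Bˣ}

theorem map_cocycle_inv_mul_eq_inv (u_one : (u 1 : B) = 1)
    (u_mul : ∀ f g, (u f : B) * u g = ι (ω f g) * u (f * g)) (g : G) :
    ι ↑(ω g g⁻¹)⁻¹ * (u g : B) = ↑(u g⁻¹)⁻¹ := by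
  apply Units.eq_inv_of_mul_eq_one_right
  rw [mul_assoc, u_mul, mul_inv_cancel, u_one, mul_one, ← map_mul, Units.inv_mul, map_one]

theorem unit_mul_map_mul_unit (u_comm : ∀ g a, (u g : B) * ι a = ι (φ g a) * u g)
    (u_mul : ∀ f g, (u f : B) * u g = ι (ω f g) * u (f * g)) (g k : G) (a : A) :
    (u g : B) * (ι a * u k) = ι (φ g a * ω g k) * u (g * k) := by
  rw [← mul_assoc, u_comm, mul_assoc, u_mul, map_mul, mul_assoc]

variable [Fintype G]

theorem sum_map_cocycle_inv_mul_tmul_eq_invTensorSum (u_one : (u 1 : B) = 1)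
    (u_mul : ∀ f g, (u f : B) * u g = ι (ω f g) * u (f * g)) (c : B) :
    ∑ g, (c * ι ↑(ω g g⁻¹)⁻¹ * (u g : B)) ⊗ₜ[ℤ] (u g⁻¹ : B) = invTensorSum c u := by
  simp only [mul_assoc, map_cocycle_inv_mul_eq_inv u_one u_mul]
  exact Equiv.sum_comp (Equiv.inv G) fun g => (c * ↑(u g)⁻¹) ⊗ₜ[ℤ] (u g : B)

theorem crossedProduct_separability_element_general
    (u_one : (u 1 : B) = 1) (u_comm : ∀ g a, (u g : B) * ι a = ι (φ g a) * u g)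
    (u_mul : ∀ f g, (u f : B) * u g = ι (ω f g) * u (f * g))
    (span : ∀ b : B, ∃ c : G → A, b = ∑ g, ι (c g) * u g)
    {m : B} (hm : m * Fintype.card G = 1) :
    let w : B ⊗[ℤ] B := ∑ g, (m * ι ↑(ω g g⁻¹)⁻¹ * (u g : B)) ⊗ₜ[ℤ] (u g⁻¹ : B)
    LinearMap.mul' ℤ B w = 1 ∧
      ∀ b : B,
        TensorProduct.map (LinearMap.mulLeft ℤ b) LinearMap.id w -
          TensorProduct.map LinearMap.id (LinearMap.mulRight ℤ b) w ∈ balancedRel ι := by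
  have hm' : (Fintype.card G : B) * m = 1 := (Nat.cast_commute _ m).eq.trans hm
  have m_central (b : B) : Commute b m :=
    Commute.units_inv_right (u := ⟨_, m, hm', hm⟩) (Nat.commute_cast b _)
  simp only [sum_map_cocycle_inv_mul_tmul_eq_invTensorSum u_one u_mul, ← tensorCommutator_apply]
  refine ⟨(mul'_invTensorSum m u).trans hm', fun b => ?_⟩
  obtain ⟨c, rfl⟩ := span b
  rw [map_sum]
  exact sum_mem fun k _ => tensorCommutator_invTensorSum_mem_balancedRel ι (m_central _) u
    (Equiv.mulRight k) _ fun g => unit_mul_map_mul_unit u_comm u_mul g k (c k)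

end CrossedRelations

/-- Let `G` be a finite group of order `n` acting on the ring `A`
via the datum `(φ, ω)`, with `n` invertible in `A`, and let `B = A[G, (φ, ω)]` be
the crossed product.  Then
`w := n⁻¹ Σ_{g ∈ G} ω_{g,g⁻¹}⁻¹ [g] ⊗ [g⁻¹] ∈ B ⊗_A B`
satisfies `μ(w) = 1` and `b·w = w·b` for every `b ∈ B` (the latter equality holding
in `B ⊗_A B`, i.e. modulo the balancing relations). -/
theorem crossedProduct_separability_element
    {A : Type u} [Ring A] {G : Type v} [Group G] [Fintype G]
    (D : CrossedSystem A G) (B : Type w) [Ring B] (ι : A →+* B) (u : G → Bˣ)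
    (hB : IsCrossedProduct D B ι u) (hn : IsUnit ((Fintype.card G : ℕ) : A)) :
    let w : TensorProduct ℤ B B :=
      ∑ g : G, (ι (↑hn.unit⁻¹ : A) * ι ((D.ω g g⁻¹)⁻¹ : Aˣ) * (u g : B)) ⊗ₜ[ℤ] ((u g⁻¹ : B))
    LinearMap.mul' ℤ B w = 1 ∧
      ∀ b : B,
        TensorProduct.map (LinearMap.mulLeft ℤ b) (LinearMap.id : B →ₗ[ℤ] B) w -
          TensorProduct.map (LinearMap.id : B →ₗ[ℤ] B) (LinearMap.mulRight ℤ b) w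
          ∈ balancedRel ι := by
  exact crossedProduct_separability_element_general hB.u_one hB.u_comm hB.u_mul
    (fun b => (hB.free b).exists) (by rw [← map_natCast ι, ← map_mul, hn.val_inv_mul, map_one])
end

section
/- Let A be a ring and G a finite group acting on A via a datum (φ, ω). Assume that n := |G| is invertible in A. Then the ring extension A ⊆ A[G,(φ,ω)] is strictly separable. -/
/-!
Statement 4: Let `A` be a ring and `G` a finite group acting on `A` via a datum
`(φ, ω)`.  If `n := |G|` is invertible in `A`, then the ring extension
`A ⊆ A[G, (φ, ω)]` is strictly separable.
-/

universe u v w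

open TensorProduct

/-!
Writing `n = |G|`, a separability element is `n⁻¹ ∑ g, [g] ⊗ [g]⁻¹`, as for group algebras in
Maschke's theorem. It commutes with every `b` because the same matrix `M` over `A` describes
`b [h] = ∑ g, [g] M g h` and `[g]⁻¹ b = ∑ h, M g h [h]⁻¹`. The bimodule retraction reads off the
coefficient of `[e]`. Finally, the `[g]` form a left basis of the crossed product, and also a right
basis since `a [g] = [g] φ_g⁻¹(a)`; this gives projectivity and flatness.
-/

section RingExtension

variable {A B κ : Type*} [Ring A] [Ring B] [Fintype κ] {f : A →+* B}

/-- The image of `w` in `B ⊗_A B` is a Casimir element, that is, `b • w = w • b` for all `b : B`.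
Such elements correspond to the bimodule maps `B → B ⊗_A B`. As in `StrictlySeparable`, `B ⊗_A B`
is encoded as `B ⊗_ℤ B` modulo `balancedRel f`. -/
def IsCasimirElement (f : A →+* B) (w : B ⊗[ℤ] B) : Prop :=
  ∀ b : B, TensorProduct.map (LinearMap.mulLeft ℤ b) LinearMap.id w -
    TensorProduct.map LinearMap.id (LinearMap.mulRight ℤ b) w ∈ balancedRel f

theorem mul_tmul_sub_tmul_mul_mem_balancedRel (b : B) (a : A) (b' : B) :
    (b * f a) ⊗ₜ[ℤ] b' - b ⊗ₜ[ℤ] (f a * b') ∈ balancedRel f :=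
  AddSubgroup.subset_closure ⟨b, a, b', rfl⟩

theorem isCasimirElement_sum_tmul {x y : κ → B} (M : B → Matrix κ κ A)
    (hx : ∀ b j, b * x j = ∑ i, x i * f (M b i j))
    (hy : ∀ b i, y i * b = ∑ j, f (M b i j) * y j) :
    IsCasimirElement f (∑ i, x i ⊗ₜ[ℤ] y i) := by
  intro b
  have left_mul : TensorProduct.map (LinearMap.mulLeft ℤ b) LinearMap.id (∑ i, x i ⊗ₜ[ℤ] y i) =
      ∑ i, ∑ j, (x i * f (M b i j)) ⊗ₜ[ℤ] y j := by
    rw [Finset.sum_comm]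
    simp [hx, TensorProduct.sum_tmul]
  have right_mul : TensorProduct.map LinearMap.id (LinearMap.mulRight ℤ b) (∑ i, x i ⊗ₜ[ℤ] y i) =
      ∑ i, ∑ j, x i ⊗ₜ[ℤ] (f (M b i j) * y j) := by
    simp [hy, TensorProduct.tmul_sum]
  rw [left_mul, right_mul]
  simp only [← Finset.sum_sub_distrib]
  exact sum_mem fun i _ => sum_mem fun j _ => mul_tmul_sub_tmul_mul_mem_balancedRel _ _ _

theorem exists_mul'_eq_one_and_isCasimirElement {u : κ → Bˣ}
    (hcard : IsUnit (Fintype.card κ : B)) (M : B → Matrix κ κ A)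
    (hu : ∀ b j, b * u j = ∑ i, u i * f (M b i j))
    (hu_inv : ∀ b i, ↑(u i)⁻¹ * b = ∑ j, f (M b i j) * ↑(u j)⁻¹) :
    ∃ w : B ⊗[ℤ] B, LinearMap.mul' ℤ B w = 1 ∧ IsCasimirElement f w := by
  obtain ⟨n, hn⟩ := hcard
  have n_inv_central (b : B) : ↑n⁻¹ * b = b * ↑n⁻¹ :=
    Commute.units_inv_left (hn ▸ Nat.cast_commute _ b)
  refine ⟨∑ i, (↑n⁻¹ * ↑(u i)) ⊗ₜ[ℤ] ↑(u i)⁻¹, ?_, isCasimirElement_sum_tmul M ?_ hu_inv⟩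
  · simp [mul_assoc, ← hn]
  · intro b j
    calc b * (↑n⁻¹ * u j) = ↑n⁻¹ * (b * u j) := by rw [← mul_assoc, ← n_inv_central, mul_assoc]
      _ = ∑ i, ↑n⁻¹ * u i * f (M b i j) := by simp only [hu b, Finset.mul_sum, mul_assoc]

theorem rightFlat_of_dualBasis (y : κ → B) (coord : κ → B →+ A)
    (coord_mul : ∀ i b a, coord i (b * f a) = coord i b * a)
    (sum_coord : ∀ b, ∑ i, y i * f (coord i b) = b) : RightFlat f := by
  intro n x a hxa
  let e := Fintype.equivFin κ
  refine ⟨Fintype.card κ, y ∘ e.symm, fun j i => coord (e.symm j) (x i), fun i => ?_, fun j => ?_⟩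
  · exact (sum_coord (x i)).symm.trans (e.symm.sum_comp fun k => y k * f (coord k (x i))).symm
  · simp only [← coord_mul, ← map_sum, hxa, map_zero]

end RingExtension

theorem projective_of_dualBasis {R M κ : Type*} [Semiring R] [AddCommMonoid M] [Module R M]
    [Fintype κ] (y : κ → M) (coord : κ → M →ₗ[R] R) (sum_coord : ∀ m, ∑ i, coord i m • y i = m) :
    Module.Projective R M :=
  .of_split (LinearMap.pi coord) (Fintype.linearCombination R y) <|
    LinearMap.ext fun m => by simpa [Fintype.linearCombination_apply] using sum_coord m

namespace IsCrossedProduct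

variable {A : Type u} [Ring A] {G : Type v} [Group G] [Fintype G] {D : CrossedSystem A G}
  {B : Type w} [Ring B] {ι : A →+* B} {u : G → Bˣ}

/-- The identification of the crossed product with the functions `G → A`, sending `c` to
`∑ g, c g [g]`; it is only additive, so that `B` needs no `A`-module instance. -/
noncomputable def sumEquiv (hB : IsCrossedProduct D B ι u) : (G → A) ≃+ B :=
  AddEquiv.ofBijective
    ({ toFun := fun c => ∑ g, ι (c g) * u g
       map_zero' := by simp
       map_add' := fun c d => by simp [add_mul, Finset.sum_add_distrib] } : (G → A) →+ B) <|
    (Function.bijective_iff_existsUnique _).2 fun b => by simpa [eq_comm] using hB.free b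

/-- The coefficient of `[g]`, as an additive map on the crossed product. -/
noncomputable def coord (hB : IsCrossedProduct D B ι u) (g : G) : B →+ A :=
  (Pi.evalAddMonoidHom (fun _ : G => A) g).comp hB.sumEquiv.symm.toAddMonoidHom

theorem sum_coord (hB : IsCrossedProduct D B ι u) (b : B) : ∑ g, ι (hB.coord g b) * u g = b :=
  hB.sumEquiv.apply_symm_apply b

theorem coord_sum (hB : IsCrossedProduct D B ι u) (c : G → A) (g : G) :
    hB.coord g (∑ h, ι (c h) * u h) = c g :=
  congrFun (hB.sumEquiv.symm_apply_apply c) g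

theorem coord_ι_mul (hB : IsCrossedProduct D B ι u) (g : G) (a : A) (b : B) :
    hB.coord g (ι a * b) = a * hB.coord g b := by
  have expansion : ι a * b = ∑ h, ι (a * hB.coord h b) * u h := by
    simp only [map_mul, mul_assoc, ← Finset.mul_sum, hB.sum_coord]
  rw [expansion, hB.coord_sum]

theorem coord_mul_ι (hB : IsCrossedProduct D B ι u) (g : G) (a : A) (b : B) :
    hB.coord g (b * ι a) = hB.coord g b * D.φ g a := by
  have expansion : b * ι a = ∑ h, ι (hB.coord h b * D.φ h a) * u h := by
    simp only [map_mul, mul_assoc, ← hB.u_comm]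
    simp only [← mul_assoc, ← Finset.sum_mul, hB.sum_coord]
  rw [expansion, hB.coord_sum]

theorem coord_one_one (hB : IsCrossedProduct D B ι u) : hB.coord 1 1 = 1 := by
  classical
  have expansion : (1 : B) = ∑ h, ι ((Pi.single 1 1 : G → A) h) * u h := by
    simp [Pi.single_apply, apply_ite ι, hB.u_one]
  rw [expansion, hB.coord_sum, Pi.single_eq_same]

theorem coord_one_ι (hB : IsCrossedProduct D B ι u) (a : A) : hB.coord 1 (ι a) = a := by
  simpa [hB.coord_one_one] using hB.coord_ι_mul 1 a 1

theorem coord_one_mul_ι (hB : IsCrossedProduct D B ι u) (a : A) (b : B) :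
    hB.coord 1 (b * ι a) = hB.coord 1 b * a := by
  simp [hB.coord_mul_ι, D.φ_one]

theorem u_mul_ι_symm (hB : IsCrossedProduct D B ι u) (g : G) (a : A) :
    u g * ι ((D.φ g).symm a) = ι a * u g := by
  rw [hB.u_comm, RingEquiv.apply_symm_apply]

theorem projective (hB : IsCrossedProduct D B ι u) :
    letI : Module A B := Module.compHom B ι; Module.Projective A B := by
  let : Module A B := Module.compHom B ι
  exact projective_of_dualBasis (fun g => (u g : B))
    (fun g => { hB.coord g with map_smul' := hB.coord_ι_mul g }) hB.sum_coord

theorem rightFlat (hB : IsCrossedProduct D B ι u) : RightFlat ι :=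
  rightFlat_of_dualBasis (fun g => (u g : B))
    (fun g => ((D.φ g).symm : A →+ A).comp (hB.coord g))
    (fun g b a => by simp [hB.coord_mul_ι])
    (fun b => by simp [hB.u_mul_ι_symm, hB.sum_coord])

/-- The matrix over `A` of left multiplication by `b` on the crossed product, viewed as a free
right `A`-module with basis `([g])`. Its entries come from
`a [k] [h] = a ω_{k,h} [g] = [g] φ_g⁻¹(a ω_{k,h})` with `g = k h`. -/
noncomputable def leftMulMatrix (hB : IsCrossedProduct D B ι u) (b : B) : Matrix G G A :=
  .of fun g h => (D.φ g).symm (hB.coord (g / h) b * D.ω (g / h) h)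

theorem u_mul_ι_leftMulMatrix (hB : IsCrossedProduct D B ι u) (b : B) (g h : G) :
    u g * ι (hB.leftMulMatrix b g h) = ι (hB.coord (g / h) b) * u (g / h) * u h := by
  rw [leftMulMatrix, Matrix.of_apply, hB.u_mul_ι_symm, mul_assoc, hB.u_mul, div_mul_cancel,
    map_mul, mul_assoc]

theorem mul_u (hB : IsCrossedProduct D B ι u) (b : B) (h : G) :
    b * u h = ∑ g, u g * ι (hB.leftMulMatrix b g h) := by
  have reindex : ∑ g, ι (hB.coord (g / h) b) * (u (g / h) : B) = b :=
    ((Equiv.divRight h).sum_comp fun k => ι (hB.coord k b) * (u k : B)).trans (hB.sum_coord b)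
  simp only [u_mul_ι_leftMulMatrix, ← Finset.sum_mul, reindex]

theorem u_inv_mul (hB : IsCrossedProduct D B ι u) (b : B) (g : G) :
    ↑(u g)⁻¹ * b = ∑ h, ι (hB.leftMulMatrix b g h) * ↑(u h)⁻¹ := by
  have reindex : ∑ h, ι (hB.coord (g / h) b) * (u (g / h) : B) = b :=
    ((Equiv.divLeft g).sum_comp fun k => ι (hB.coord k b) * (u k : B)).trans (hB.sum_coord b)
  rw [Units.inv_mul_eq_iff_eq_mul, Finset.mul_sum]
  simp only [← mul_assoc, u_mul_ι_leftMulMatrix, Units.mul_inv_cancel_right, reindex]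

end IsCrossedProduct

/-- If the finite group `G` acts on the ring `A` via the datum
`(φ, ω)` and `|G|` is invertible in `A`, then the extension of `A` by the crossed
product `A[G, (φ, ω)]` is strictly separable. -/
theorem strictlySeparable_crossedProduct
    {A : Type u} [Ring A] {G : Type v} [Group G] [Fintype G]
    (D : CrossedSystem A G) (B : Type w) [Ring B] (ι : A →+* B) (u : G → Bˣ)
    (hB : IsCrossedProduct D B ι u) (hn : IsUnit ((Fintype.card G : ℕ) : A)) :
    StrictlySeparable ι := by
  have hcard : IsUnit (Fintype.card G : B) := by simpa using hn.map ι
  exact ⟨exists_mul'_eq_one_and_isCasimirElement hcard hB.leftMulMatrix hB.mul_u hB.u_inv_mul,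
    ⟨hB.coord 1, hB.coord_one_ι, hB.coord_ι_mul 1, hB.coord_one_mul_ι⟩,
    hB.projective, hB.rightFlat⟩
end

section
/- Let A be a ring and G a finite group acting on A via a datum (φ, ω), with |G| invertible in A. Then A is semi-simple if and only if the crossed product A[G,(φ,ω)] is semi-simple. -/
/-!
Statement 5: For a finite group `G` acting on a ring `A` via a datum `(φ, ω)` with
`|G|` invertible in `A`, the ring `A` is semi-simple if and only if the crossed
product `A[G, (φ, ω)]` is semi-simple.
-/

universe u v w

/-!
If `A` is semisimple, a `B`-submodule `N` of a `B`-module has an `A`-linear retraction `p`, and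
`x ↦ ∑ g, [g]⁻¹ p([g] x)`, as in Maschke's theorem, is `B`-linear: the factors `ω` that appear when
`[f] [g]` is rewritten as `ω_{f,g} [fg]` cancel because `p` is `A`-linear. On `N` this map is
multiplication by `|G|`, which is bijective.

Conversely, the coefficient at `1` is a retraction `π : B → A` of `A`-bimodules. For a left ideal
`I` of `A`, semisimplicity of `B` gives `e ∈ B I` with `x e = x` for all `x ∈ B I`, and then
`π e ∈ I` satisfies `x (π e) = π (x e) = x` for all `x ∈ I`.
-/

theorem isSemisimpleModule_of_bijective_comp_subtype {R M : Type*} [Ring R] [AddCommGroup M]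
    [Module R M]
    (h : ∀ N : Submodule R M, ∃ f : M →ₗ[R] N, Function.Bijective (f ∘ₗ N.subtype)) :
    IsSemisimpleModule R M := by
  refine (isSemisimpleModule_iff R M).mpr ⟨fun N => ?_⟩
  obtain ⟨f, hf⟩ := h N
  let e : N ≃ₗ[R] N := LinearEquiv.ofBijective (f ∘ₗ N.subtype) hf
  exact ⟨_, LinearMap.isCompl_of_proj (f := e.symm ∘ₗ f) e.symm_apply_apply⟩

theorem exists_retraction_of_isSemisimpleModule {A B M : Type*} [Ring A] [Ring B] {ι : A →+* B}
    [AddCommGroup M] [Module A M] [Module B M] (hM : ∀ (a : A) (x : M), a • x = ι a • x)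
    [IsSemisimpleModule A M] (N : Submodule B M) :
    ∃ p : M →+ N, (∀ a x, p (ι a • x) = ι a • p x) ∧ ∀ x : N, p x = x := by
  let _ : Module A B := Module.compHom B ι
  have : IsScalarTower A B M := ⟨fun a b x => by rw [hM]; exact mul_smul (ι a) b x⟩
  obtain ⟨p, hp⟩ := IsSemisimpleModule.extension_property (N.subtype.restrictScalars A)
    N.subtype_injective LinearMap.id
  refine ⟨p.toAddMonoidHom, fun a x => ?_, fun x => LinearMap.congr_fun hp x⟩
  have smul_eq (y : N) : ι a • y = a • y := Subtype.ext (hM a y).symm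
  rw [← hM, smul_eq]
  exact p.map_smul a x

theorem isSemisimpleRing_iff_exists_mem_forall_mul_eq {R : Type*} [Ring R] :
    IsSemisimpleRing R ↔ ∀ I : Ideal R, ∃ e ∈ I, ∀ x ∈ I, x * e = x := by
  constructor
  · intro _ I
    obtain ⟨e, he, rfl⟩ := IsSemisimpleRing.ideal_eq_span_idempotent I
    refine ⟨e, Ideal.mem_span_singleton_self e, fun x hx => ?_⟩
    obtain ⟨r, rfl⟩ := Ideal.mem_span_singleton'.mp hx
    rw [mul_assoc, he.eq]
  · refine fun h => isSemisimpleModule_of_bijective_comp_subtype fun I => ?_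
    obtain ⟨e, heI, he⟩ := h I
    let f : R →ₗ[R] I := LinearMap.toSpanSingleton R I ⟨e, heI⟩
    have hf : f ∘ₗ I.subtype = LinearMap.id :=
      LinearMap.ext fun x => Subtype.ext (he x x.2)
    exact ⟨f, hf ▸ Function.bijective_id⟩

section BimoduleRetraction

variable {A B : Type*} [Ring A] [Ring B] {ι : A →+* B} {π : B →+ A}

theorem apply_mem_of_mem_ideal_map (hπ_right : ∀ b a, π (b * ι a) = π b * a) {I : Ideal A} {x : B}
    (hx : x ∈ I.map ι) : π x ∈ I := by
  induction hx using Submodule.closure_induction with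
  | zero => simp
  | add x y _ _ hx hy => simpa using I.add_mem hx hy
  | smul_mem b _ hx =>
    obtain ⟨a, ha, rfl⟩ := hx
    simpa [hπ_right] using I.mul_mem_left (π b) ha

theorem isSemisimpleRing_of_bimodule_retraction (hπ_left : ∀ a b, π (ι a * b) = a * π b)
    (hπ_right : ∀ b a, π (b * ι a) = π b * a) (hπ_one : π 1 = 1) [IsSemisimpleRing B] :
    IsSemisimpleRing A := by
  refine isSemisimpleRing_iff_exists_mem_forall_mul_eq.mpr fun I => ?_
  obtain ⟨e, heI, he⟩ := isSemisimpleRing_iff_exists_mem_forall_mul_eq.mp ‹_› (I.map ι)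
  refine ⟨π e, apply_mem_of_mem_ideal_map hπ_right heI, fun x hx => ?_⟩
  calc x * π e = π (ι x * e) := (hπ_left x e).symm
    _ = π (ι x * 1) := by rw [he _ (Ideal.mem_map_of_mem ι hx), mul_one]
    _ = x := by rw [hπ_left, hπ_one, mul_one]

end BimoduleRetraction

section ConjugateSum

variable {G B M N : Type*} [Fintype G] [Ring B] [AddCommGroup M] [Module B M] [AddCommGroup N]
  [Module B N]

/-- The sum of the conjugates of an additive map `p` by a finite family of units `u`: Maschke's
average without the division by the number of units, so that no inverse has to be chosen. -/
def conjugateSum (u : G → Bˣ) (p : M →+ N) : M →+ N :=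
  ∑ g, (DistribSMul.toAddMonoidHom N (u g)⁻¹).comp (p.comp (DistribSMul.toAddMonoidHom M (u g)))

theorem conjugateSum_apply (u : G → Bˣ) (p : M →+ N) (x : M) :
    conjugateSum u p x = ∑ g, (u g)⁻¹ • p (u g • x) := by
  simp [conjugateSum]

theorem conjugateSum_apply_of_retraction (u : G → Bˣ) {S : Submodule B M} {p : M →+ S}
    (hp : ∀ x : S, p x = x) (x : S) : conjugateSum u p x = Fintype.card G • x := by
  have conjugate_eq (g : G) : (u g)⁻¹ • p (u g • (x : M)) = x := by
    rw [inv_smul_eq_iff]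
    exact hp (u g • x)
  simp [conjugateSum_apply, conjugate_eq]

end ConjugateSum

namespace IsCrossedProduct

variable {A : Type*} [Ring A] {G : Type*} [Group G] [Fintype G] {D : CrossedSystem A G}
  {B : Type*} [Ring B] {ι : A →+* B} {u : G → Bˣ}

section Modules

variable {M N : Type*} [AddCommGroup M] [Module B M] [AddCommGroup N] [Module B N]

theorem unit_smul_base_smul (hB : IsCrossedProduct D B ι u) (g : G) (a : A) (x : M) :
    u g • ι a • x = ι (D.φ g a) • u g • x := by
  simp only [Units.smul_def, smul_smul, hB.u_comm]

theorem inv_unit_smul_base_smul (hB : IsCrossedProduct D B ι u) (g : G) (a : A) (x : M) :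
    (u g)⁻¹ • ι (D.φ g a) • x = ι a • (u g)⁻¹ • x := by
  rw [inv_smul_eq_iff, hB.unit_smul_base_smul, smul_inv_smul]

theorem unit_smul_unit_smul (hB : IsCrossedProduct D B ι u) (f g : G) (x : M) :
    u f • u g • x = ι (D.ω f g) • u (f * g) • x := by
  simp only [Units.smul_def, smul_smul, hB.u_mul]

theorem inv_unit_smul_cocycle_smul (hB : IsCrossedProduct D B ι u) (f g : G) (x : M) :
    (u f)⁻¹ • ι (D.ω f g) • x = u g • (u (f * g))⁻¹ • x := by
  rw [inv_smul_eq_iff, hB.unit_smul_unit_smul, smul_inv_smul]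

theorem map_smul_of_map_smul_generators (hB : IsCrossedProduct D B ι u) {f : M →+ N}
    (hι : ∀ a x, f (ι a • x) = ι a • f x) (hu : ∀ g x, f (u g • x) = u g • f x) (b : B) (x : M) :
    f (b • x) = b • f x := by
  obtain ⟨c, rfl, -⟩ := hB.free b
  simp only [Finset.sum_smul, mul_smul, map_sum, hι, ← Units.smul_def, hu]

theorem conjugateSum_base_smul (hB : IsCrossedProduct D B ι u) {p : M →+ N}
    (hp : ∀ a x, p (ι a • x) = ι a • p x) (a : A) (x : M) :
    conjugateSum u p (ι a • x) = ι a • conjugateSum u p x := by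
  simp only [conjugateSum_apply, Finset.smul_sum, hB.unit_smul_base_smul, hp,
    hB.inv_unit_smul_base_smul]

theorem conjugateSum_unit_smul (hB : IsCrossedProduct D B ι u) {p : M →+ N}
    (hp : ∀ a x, p (ι a • x) = ι a • p x) (h : G) (x : M) :
    conjugateSum u p (u h • x) = u h • conjugateSum u p x := by
  simp only [conjugateSum_apply, Finset.smul_sum, hB.unit_smul_unit_smul, hp,
    hB.inv_unit_smul_cocycle_smul]
  exact Equiv.sum_comp (Equiv.mulRight h) fun g => u h • (u g)⁻¹ • p (u g • x)

/-- The sum of the conjugates of an `A`-linear map by the units `[g]`, as a linear map over the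
crossed product. The `A`-module structures are those restricted along `ι`, so `A`-linearity is the
hypothesis `hp`. -/
def conjugateSumLinearMap (hB : IsCrossedProduct D B ι u) (p : M →+ N)
    (hp : ∀ a x, p (ι a • x) = ι a • p x) : M →ₗ[B] N where
  __ := conjugateSum u p
  map_smul' := hB.map_smul_of_map_smul_generators (hB.conjugateSum_base_smul hp)
    (hB.conjugateSum_unit_smul hp)

theorem isSemisimpleModule_of_isUnit_card (hB : IsCrossedProduct D B ι u)
    (hn : IsUnit (Fintype.card G : B)) [Module A M] (hM : ∀ (a : A) (x : M), a • x = ι a • x)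
    [IsSemisimpleModule A M] : IsSemisimpleModule B M := by
  refine isSemisimpleModule_of_bijective_comp_subtype fun N => ?_
  obtain ⟨p, hp, hpN⟩ := exists_retraction_of_isSemisimpleModule hM N
  refine ⟨hB.conjugateSumLinearMap p hp, ?_⟩
  convert hn.smul_bijective (β := N) using 2 with x
  rw [Nat.cast_smul_eq_nsmul]
  exact conjugateSum_apply_of_retraction u hpN x

end Modules

section Coefficients

/-- The coefficients of an element of the crossed product in the basis `[g]`. -/
noncomputable def coeff (hB : IsCrossedProduct D B ι u) : B ≃+ (G → A) :=
  .symm <| .ofBijective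
    (AddMonoidHom.mk' (fun c : G → A => ∑ g, ι (c g) * u g) fun c d => by
      simp [add_mul, Finset.sum_add_distrib])
    (Function.bijective_iff_existsUnique _ |>.mpr fun b => by simpa [eq_comm] using hB.free b)

theorem coeff_eq_iff (hB : IsCrossedProduct D B ι u) {b : B} {c : G → A} :
    hB.coeff b = c ↔ b = ∑ g, ι (c g) * u g :=
  AddEquiv.symm_apply_eq _

theorem sum_coeff (hB : IsCrossedProduct D B ι u) (b : B) :
    ∑ g, ι (hB.coeff b g) * u g = b :=
  (hB.coeff_eq_iff.mp rfl).symm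

theorem coeff_base_mul (hB : IsCrossedProduct D B ι u) (a : A) (b : B) :
    hB.coeff (ι a * b) = fun g => a * hB.coeff b g := by
  simp only [hB.coeff_eq_iff, map_mul, mul_assoc, ← Finset.mul_sum, hB.sum_coeff]

theorem coeff_mul_base (hB : IsCrossedProduct D B ι u) (b : B) (a : A) :
    hB.coeff (b * ι a) = fun g => hB.coeff b g * D.φ g a := by
  simp only [hB.coeff_eq_iff, map_mul, mul_assoc, ← hB.u_comm]
  simp only [← mul_assoc, ← Finset.sum_mul, hB.sum_coeff]

theorem coeff_one [DecidableEq G] (hB : IsCrossedProduct D B ι u) :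
    hB.coeff 1 = Pi.single 1 1 := by
  rw [hB.coeff_eq_iff, Finset.sum_eq_single 1] <;> simp +contextual [hB.u_one]

end Coefficients

theorem isSemisimpleRing_of_isUnit_card (hB : IsCrossedProduct D B ι u)
    (hn : IsUnit (Fintype.card G : B)) [IsSemisimpleRing A] : IsSemisimpleRing B :=
  letI : Module A B := Module.compHom B ι
  hB.isSemisimpleModule_of_isUnit_card hn fun _ _ => rfl

theorem isSemisimpleRing_coefficientRing (hB : IsCrossedProduct D B ι u) [IsSemisimpleRing B] :
    IsSemisimpleRing A := by
  classical
  refine isSemisimpleRing_of_bimodule_retraction (ι := ι)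
    (π := (Pi.evalAddMonoidHom (fun _ : G => A) 1).comp hB.coeff.toAddMonoidHom)
    (fun a b => ?_) (fun b a => ?_) ?_
  · simp [hB.coeff_base_mul]
  · simp [hB.coeff_mul_base, D.φ_one]
  · simp [hB.coeff_one]

end IsCrossedProduct

/-- Let `G` be a finite group acting on the ring `A` via the datum
`(φ, ω)`, with `|G|` invertible in `A`.  Then `A` is semi-simple if and only if the
crossed product `A[G, (φ, ω)]` is semi-simple. -/
theorem isSemisimpleRing_iff_isSemisimpleRing_crossedProduct
    {A : Type u} [Ring A] {G : Type v} [Group G] [Fintype G]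
    (D : CrossedSystem A G) (B : Type w) [Ring B] (ι : A →+* B) (u : G → Bˣ)
    (hB : IsCrossedProduct D B ι u) (hn : IsUnit ((Fintype.card G : ℕ) : A)) :
    IsSemisimpleRing A ↔ IsSemisimpleRing B :=
  ⟨fun _ => hB.isSemisimpleRing_of_isUnit_card (by simpa using hn.map ι),
    fun _ => hB.isSemisimpleRing_coefficientRing⟩
end

section
/- Let A be a ring, G a finite group acting on A via a datum (φ, ω), and P a G-invariant left A-module: for each g ∈ G there is an additive automorphism α_g : P → P with α_g(a·p) = φ_g(a)·α_g(p) for all a ∈ A, p ∈ P, and α_e = id. Define ψ_g : End_A(P) → End_A(P) by ψ_g(ρ) = α_g ∘ ρ ∘ α_g⁻¹, and ξ_{f,g} := λ_{ω_{f,g}⁻¹} ∘ α_f ∘ α_g ∘ α_{fg}⁻¹, where λ_b(p) = b·p. Then each ψ_g is a ring automorphism of End_A(P), each ξ_{f,g} is an A-linear automorphism of P (hence a unit of End_A(P)), and (ψ, ξ) satisfies the axioms of an action of G on the ring End_A(P): ψ_{g₁}(ψ_{g₂}(ρ)) = ξ_{g₁,g₂} ∘ ψ_{g₁g₂}(ρ)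 ∘ ξ_{g₁,g₂}⁻¹, ψ_e = id, ξ_{g,e} = id = ξ_{e,g}, and ψ_f(ξ_{g,h}) ∘ ξ_{f,gh} = ξ_{f,g} ∘ ξ_{fg,h} for all f, g, h ∈ G. -/
/-!
Statement 7: Let `G` be a finite group acting on a ring `A` via a datum `(φ, ω)` and
let `P` be a `G`-invariant left `A`-module, i.e. for each `g ∈ G` there is an
additive automorphism `α_g` of `P` with `α_g(a·p) = φ_g(a)·α_g(p)` and `α_e = id`.
Then the formulas `ψ_g(ρ) = α_g ∘ ρ ∘ α_g⁻¹` and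
`ξ_{f,g} = λ_{ω_{f,g}⁻¹} ∘ α_f ∘ α_g ∘ α_{fg}⁻¹` define an action `(ψ, ξ)` of `G`
on the endomorphism ring `End_A(P)`: each `ψ_g` is a ring automorphism of
`End_A(P)`, each `ξ_{f,g}` is an `A`-linear automorphism of `P` (a unit of
`End_A(P)`), and the axioms of an action with a system of factors hold.
-/

universe u v w


/-!
The units `ξ_{f,g}` are determined by `α_f ∘ α_g = λ_{ω_{f,g}} ∘ ξ_{f,g} ∘ α_{fg}`. Since `α_{fg}`
is surjective, the axioms of an action may be tested on elements `α_{fg} p`, where this identity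
removes `ξ`. The compatibility of `ψ` with `ξ` becomes the `A`-linearity of `ψ_f (ψ_g ρ)`, and the
cocycle identity for `ξ` becomes the inverse, in `Aˣ`, of the one for `ω`.
-/

theorem conjRingEquiv_eq_refl_of_forall_apply_eq {R M : Type*} [Semiring R] [AddCommMonoid M]
    [Module R M] {σ σ' : R →+* R} [RingHomInvPair σ σ'] [RingHomInvPair σ' σ]
    (e : M ≃ₛₗ[σ] M) (he : ∀ x, e x = x) :
    e.conjRingEquiv = RingEquiv.refl (Module.End R M) := by
  ext ρ x
  have symm_apply : e.symm x = x := e.symm_apply_eq.mpr (he x).symm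
  rw [LinearEquiv.conjRingEquiv_apply_apply, he, symm_apply, RingEquiv.refl_apply]

namespace CrossedSystem

attribute [local instance] RingHomInvPair.of_ringEquiv RingHomInvPair.of_ringEquiv_symm

variable {A : Type u} [Ring A] {G : Type v} [Group G] (D : CrossedSystem A G)

theorem inv_cocycle (f g h : G) :
    (↑(D.ω f (g * h))⁻¹ : A) * D.φ f ↑(D.ω g h)⁻¹ = ↑(D.ω (f * g) h)⁻¹ * ↑(D.ω f g)⁻¹ := by
  have cocycle_units : Units.map (D.φ f : A →* A) (D.ω g h) * D.ω f (g * h)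
      = D.ω f g * D.ω (f * g) h := Units.ext (D.cocycle f g h)
  simpa only [mul_inv_rev, Units.val_mul, ← map_inv, Units.coe_map, MonoidHom.coe_coe] using
    congrArg (fun x : Aˣ => (↑x⁻¹ : A)) cocycle_units

variable {P : Type w} [AddCommGroup P] [Module A P]
  (α : ∀ g : G, P ≃ₛₗ[(D.φ g : A →+* A)] P)

/-- The semilinear automorphism `λ_{ω_{f,g}⁻¹} ∘ α_f ∘ α_g` of `P`. The scalar makes it semilinear
over `φ_{fg}`, like `α_{fg}`, whereas `α_f ∘ α_g` is semilinear over `φ_f ∘ φ_g`. -/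
def twistedComp (f g : G) : P ≃ₛₗ[(D.φ (f * g) : A →+* A)] P where
  __ := ((α g).toAddEquiv.trans (α f).toAddEquiv).trans
    (DistribMulAction.toAddEquiv P (D.ω f g)⁻¹)
  map_smul' a p := by
    change (↑(D.ω f g)⁻¹ : A) • α f (α g (a • p))
      = D.φ (f * g) a • (↑(D.ω f g)⁻¹ : A) • α f (α g p)
    simp only [map_smulₛₗ, RingHom.coe_coe, D.compat, smul_smul, mul_assoc,
      Units.inv_mul_cancel_left]

/-- The `A`-linear automorphism `ξ_{f,g} = λ_{ω_{f,g}⁻¹} ∘ α_f ∘ α_g ∘ α_{fg}⁻¹` of `P`, which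
measures the failure of the semilinear automorphisms `α` to multiply according to `ω`. -/
def factorEquiv (f g : G) : P ≃ₗ[A] P :=
  (α (f * g)).symm.trans (D.twistedComp α f g)

theorem factorEquiv_apply (f g : G) (p : P) :
    D.factorEquiv α f g p = (↑(D.ω f g)⁻¹ : A) • α f (α g ((α (f * g)).symm p)) :=
  rfl

theorem factorEquiv_apply_mul (f g : G) (p : P) :
    D.factorEquiv α f g (α (f * g) p) = (↑(D.ω f g)⁻¹ : A) • α f (α g p) := by
  rw [factorEquiv_apply, LinearEquiv.symm_apply_apply]

theorem factorEquiv_one_right (α_one : ∀ p, α 1 p = p) (g : G) :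
    D.factorEquiv α g 1 = LinearEquiv.refl A P := by
  ext p
  rw [factorEquiv_apply, α_one, D.ω_one_right, inv_one, Units.val_one, one_smul, mul_one,
    LinearEquiv.apply_symm_apply, LinearEquiv.refl_apply]

theorem factorEquiv_one_left (α_one : ∀ p, α 1 p = p) (g : G) :
    D.factorEquiv α 1 g = LinearEquiv.refl A P := by
  ext p
  rw [factorEquiv_apply, α_one, D.ω_one_left, inv_one, Units.val_one, one_smul, one_mul,
    LinearEquiv.apply_symm_apply, LinearEquiv.refl_apply]

theorem conjRingEquiv_conjRingEquiv_factorEquiv (f g : G) (ρ : Module.End A P) (p : P) :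
    (α f).conjRingEquiv ((α g).conjRingEquiv ρ) (D.factorEquiv α f g p)
      = D.factorEquiv α f g ((α (f * g)).conjRingEquiv ρ p) := by
  obtain ⟨q, rfl⟩ := (α (f * g)).surjective p
  simp only [factorEquiv_apply_mul, map_smul, LinearEquiv.conjRingEquiv_apply_apply,
    LinearEquiv.symm_apply_apply]

theorem factorEquiv_cocycle (f g h : G) (p : P) :
    (α f).conjRingEquiv (D.factorEquiv α g h) (D.factorEquiv α f (g * h) p)
      = D.factorEquiv α f g (D.factorEquiv α (f * g) h p) := by
  obtain ⟨q, rfl⟩ := (α (f * g * h)).surjective p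
  calc (α f).conjRingEquiv (D.factorEquiv α g h)
        (D.factorEquiv α f (g * h) (α (f * g * h) q))
      = (↑(D.ω f (g * h))⁻¹ : A) • α f (D.factorEquiv α g h (α (g * h) q)) := by
        rw [mul_assoc, factorEquiv_apply_mul, map_smul, LinearEquiv.conjRingEquiv_apply_apply,
          LinearEquiv.symm_apply_apply, LinearEquiv.coe_coe]
    _ = ((↑(D.ω f (g * h))⁻¹ : A) * D.φ f ↑(D.ω g h)⁻¹) • α f (α g (α h q)) := by
        rw [factorEquiv_apply_mul, map_smulₛₗ, smul_smul, RingHom.coe_coe]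
    _ = ((↑(D.ω (f * g) h)⁻¹ : A) * ↑(D.ω f g)⁻¹) • α f (α g (α h q)) := by
        rw [inv_cocycle]
    _ = D.factorEquiv α f g (D.factorEquiv α (f * g) h (α (f * g * h) q)) := by
        rw [factorEquiv_apply_mul, map_smul, factorEquiv_apply_mul, smul_smul]

/-- The action `(ψ, ξ)` of `G` on `End_A(P)` induced by a family `α` of semilinear automorphisms of
`P`, where `ψ_g` is conjugation by `α g`. The condition `α_e = id` is stated pointwise because
`α 1` is semilinear over `D.φ 1`, which is only propositionally the identity. -/
def endSystem (α_one : ∀ p, α 1 p = p) : CrossedSystem (Module.End A P) G where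
  φ g := (α g).conjRingEquiv
  ω f g := LinearMap.GeneralLinearGroup.ofLinearEquiv (D.factorEquiv α f g)
  compat f g ρ := by
    rw [Units.eq_mul_inv_iff_mul_eq]
    exact LinearMap.ext (D.conjRingEquiv_conjRingEquiv_factorEquiv α f g ρ)
  φ_one := conjRingEquiv_eq_refl_of_forall_apply_eq (α 1) α_one
  ω_one_right g := by
    rw [D.factorEquiv_one_right α α_one]
    rfl
  ω_one_left g := by
    rw [D.factorEquiv_one_left α α_one]
    rfl
  cocycle f g h := LinearMap.ext (D.factorEquiv_cocycle α f g h)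

end CrossedSystem

theorem crossedSystem_end_of_invariant_module_general
    {A : Type u} [Ring A] {G : Type v} [Group G]
    (D : CrossedSystem A G) (P : Type w) [AddCommGroup P] [Module A P]
    (α : G → P ≃+ P)
    (hα : ∀ (g : G) (a : A) (p : P), α g (a • p) = D.φ g a • α g p)
    (hα1 : α 1 = AddEquiv.refl P) :
    ∃ E : CrossedSystem (Module.End A P) G,
      (∀ (g : G) (ρ : Module.End A P) (p : P),
        E.φ g ρ p = α g (ρ ((α g).symm p))) ∧
      (∀ (f g : G) (p : P),
        (E.ω f g : Module.End A P) p
          = (((D.ω f g)⁻¹ : Aˣ) : A) • α f (α g ((α (f * g)).symm p))) := by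
  have invPair (g : G) := RingHomInvPair.of_ringEquiv (D.φ g)
  have invPairSymm (g : G) := RingHomInvPair.of_ringEquiv_symm (D.φ g)
  let β (g : G) : P ≃ₛₗ[(D.φ g : A →+* A)] P := { α g with map_smul' := hα g }
  have β_one (p : P) : β 1 p = p := DFunLike.congr_fun hα1 p
  exact ⟨D.endSystem β β_one, fun _ _ _ => rfl, fun _ _ _ => rfl⟩

/-- Let `G` act on the ring `A` via the datum `(φ, ω)`, and let `P`
be a `G`-invariant left `A`-module, via additive automorphisms `α_g` satisfying
`α_g (a • p) = φ_g a • α_g p` and `α_e = id`.  Then there is an action `(ψ, ξ)` of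
`G` on the ring `End_A(P)` (i.e. a crossed system, consisting of ring automorphisms
`ψ_g` of `End_A(P)` and units `ξ_{f,g}` of `End_A(P)`, satisfying the compatibility,
normalization and cocycle conditions) given by the formulas
`ψ_g(ρ) = α_g ∘ ρ ∘ α_g⁻¹` and `ξ_{f,g} = λ_{ω_{f,g}⁻¹} ∘ α_f ∘ α_g ∘ α_{fg}⁻¹`. -/
theorem crossedSystem_end_of_invariant_module
    {A : Type u} [Ring A] {G : Type v} [Group G] [Finite G]
    (D : CrossedSystem A G) (P : Type w) [AddCommGroup P] [Module A P]
    (α : G → P ≃+ P)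
    (hα : ∀ (g : G) (a : A) (p : P), α g (a • p) = D.φ g a • α g p)
    (hα1 : α 1 = AddEquiv.refl P) :
    ∃ E : CrossedSystem (Module.End A P) G,
      (∀ (g : G) (ρ : Module.End A P) (p : P),
        E.φ g ρ p = α g (ρ ((α g).symm p))) ∧
      (∀ (f g : G) (p : P),
        (E.ω f g : Module.End A P) p
          = (((D.ω f g)⁻¹ : Aˣ) : A) • α f (α g ((α (f * g)).symm p))) := by
  exact crossedSystem_end_of_invariant_module_general D P α hα hα1
end

section
/- Let n ∈ ℕ and B = (b_{ij}) be an n × n matrix over the non-negative integers with b_{ii} > 0 for all i, and such that for i ≠ j, b_{ij} ≠ 0 if and only if b_{ji} ≠ 0. Let a = (a_1, …, a_n) be a vector of positive integers and a' = B·a. Consider the assertions: (1) a'_i ≤ 2·a_i for all i; (2) for each i, either (b_{ii} ≤ 2 and b_{ij} = 0 for all j ≠ i), or there is a unique index i' ≠ i such that a_i = a_{i'}, b_{ii} = b_{ii'} = b_{i'i} = b_{i'i'} = 1 and b_{ij} = 0 for all j ∉ {i, i'}; (3) Σ_{j=1}^n b_{ij} ≤ 2 for all i. Then (1) ⇔ (2),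 (2) ⇒ (3), and if all a_i are equal, then (3) ⇒ (1). -/
/-!
Statement 11: the combinatorial lemma on matrices with non-negative integer entries.
-/

/-!
The bound `∑ j, b i j • a j ≤ 2 • a i` leaves room for one copy of `a i` next to the diagonal term,
so `b i j ≠ 0` forces `a j ≤ a i`, and by symmetry of the support `a i = a j`. Hence `a` is constant
on the support of each row, the bound becomes `(∑ j, b i j) • a i ≤ 2 • a i`, that is
`∑ j, b i j ≤ 2`, and a row with positive diagonal entry and sum at most two is either concentrated
on the diagonal or has exactly two entries `1`.
-/

section Rows

variable {ι : Type*} {b : ι → ι → ℕ}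

/-- The first alternative of assertion (2): the index `i` is linked to no other index by `b`, and
its diagonal entry is at most two. -/
def IsIsolated (b : ι → ι → ℕ) (i : ι) : Prop :=
  b i i ≤ 2 ∧ ∀ j, j ≠ i → b i j = 0

/-- The second alternative of assertion (2), for a given partner `i'`: the indices `i ≠ i'` carry
the same weight, span an all-ones `2 × 2` block of `b`, and row `i` vanishes off this block. -/
def IsTwin {α : Type*} (b : ι → ι → ℕ) (a : ι → α) (i i' : ι) : Prop :=
  i' ≠ i ∧ a i = a i' ∧ b i i = 1 ∧ b i i' = 1 ∧ b i' i = 1 ∧ b i' i' = 1 ∧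
    ∀ j, j ≠ i → j ≠ i' → b i j = 0

theorem IsIsolated.eq_of_ne_zero {i j : ι} (h : IsIsolated b i) (hij : b i j ≠ 0) : j = i :=
  not_imp_comm.1 (h.2 j) hij

theorem IsIsolated.sum_le_two [Fintype ι] {i : ι} (h : IsIsolated b i) : ∑ j, b i j ≤ 2 :=
  (Fintype.sum_eq_single i h.2).trans_le h.1

section Twin

variable {α : Type*} {a : ι → α} {i i' : ι}

theorem IsTwin.weight_eq_of_ne_zero (h : IsTwin b a i i') {j : ι} (hij : b i j ≠ 0) :
    a j = a i := by
  obtain ⟨-, weight_eq, -, -, -, -, off_block⟩ := h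
  by_cases hji : j = i
  · rw [hji]
  · rw [not_imp_comm.1 (off_block j hji) hij, weight_eq]

theorem IsTwin.sum_eq_two [Fintype ι] (h : IsTwin b a i i') : ∑ j, b i j = 2 := by
  obtain ⟨ne, -, diag, off_diag, -, -, off_block⟩ := h
  rw [Fintype.sum_eq_add i i' ne.symm fun j hj => off_block j hj.1 hj.2, diag, off_diag]

theorem IsTwin.unique (h : IsTwin b a i i') {j : ι} (hj : IsTwin b a i j) : j = i' := by
  obtain ⟨-, -, -, -, -, -, off_block⟩ := h
  obtain ⟨ne, -, -, off_diag, -⟩ := hj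
  exact not_imp_comm.1 (off_block j ne) (off_diag ▸ one_ne_zero)

end Twin

theorem eq_one_and_eq_one_and_eq_zero_of_sum_le_two [Fintype ι] {f : ι → ℕ} {i j : ι} (hij : i ≠ j)
    (hi : f i ≠ 0) (hj : f j ≠ 0) (hsum : ∑ k, f k ≤ 2) :
    f i = 1 ∧ f j = 1 ∧ ∀ k, k ≠ i → k ≠ j → f k = 0 := by
  classical
  have split : f i + f j + ∑ k ∈ {i, j}ᶜ, f k = ∑ k, f k := by
    rw [← Finset.sum_pair hij, Finset.sum_add_sum_compl]
  have rest : ∑ k ∈ {i, j}ᶜ, f k = 0 := by lia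
  refine ⟨by lia, by lia, fun k hki hkj => Finset.sum_eq_zero_iff.1 rest k ?_⟩
  simp [hki, hkj]

theorem isolated_or_existsUnique_twin [Fintype ι] {α : Type*} {a : ι → α}
    (hdiag : ∀ i, 0 < b i i) (hsymm : ∀ i j, i ≠ j → (b i j ≠ 0 ↔ b j i ≠ 0))
    (hweight : ∀ i j, b i j ≠ 0 → a j = a i) (hsum : ∀ i, ∑ j, b i j ≤ 2) (i : ι) :
    IsIsolated b i ∨ ∃! i', IsTwin b a i i' := by
  by_cases hzero : ∀ j, j ≠ i → b i j = 0
  · exact .inl ⟨(Fintype.sum_eq_single i hzero).symm.trans_le (hsum i), hzero⟩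
  · right
    push Not at hzero
    obtain ⟨i', ne, hii'⟩ := hzero
    have hi'i : b i' i ≠ 0 := (hsymm i i' ne.symm).1 hii'
    obtain ⟨diag, off_diag, off_block⟩ :=
      eq_one_and_eq_one_and_eq_zero_of_sum_le_two ne.symm (hdiag i).ne' hii' (hsum i)
    obtain ⟨diag', off_diag', -⟩ :=
      eq_one_and_eq_one_and_eq_zero_of_sum_le_two ne (hdiag i').ne' hi'i (hsum i')
    have twin : IsTwin b a i i' :=
      ⟨ne, hweight i' i hi'i, diag, off_diag, off_diag', diag', off_block⟩
    exact ⟨i', twin, fun _ => twin.unique⟩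

theorem forall_isolated_or_existsUnique_twin_iff [Fintype ι] {α : Type*} {a : ι → α}
    (hdiag : ∀ i, 0 < b i i) (hsymm : ∀ i j, i ≠ j → (b i j ≠ 0 ↔ b j i ≠ 0)) :
    (∀ i, IsIsolated b i ∨ ∃! i', IsTwin b a i i') ↔
      (∀ i j, b i j ≠ 0 → a j = a i) ∧ ∀ i, ∑ j, b i j ≤ 2 := by
  refine ⟨fun h => ⟨fun i j hij => ?_, fun i => ?_⟩,
    fun ⟨hweight, hsum⟩ => isolated_or_existsUnique_twin hdiag hsymm hweight hsum⟩
  · obtain isolated | ⟨i', twin, -⟩ := h i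
    · rw [isolated.eq_of_ne_zero hij]
    · exact twin.weight_eq_of_ne_zero hij
  · obtain isolated | ⟨i', twin, -⟩ := h i
    · exact isolated.sum_le_two
    · exact twin.sum_eq_two.le

end Rows

section Weights

variable {ι M : Type*} [Fintype ι] [AddCommMonoid M]

theorem sum_nsmul_eq_sum_nsmul_of_forall_ne_zero {c : ι → ℕ} {a : ι → M} {x : M}
    (h : ∀ j, c j ≠ 0 → a j = x) : ∑ j, c j • a j = (∑ j, c j) • x := by
  rw [← Finset.sum_nsmul_assoc]
  refine Finset.sum_congr rfl fun j _ => ?_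
  by_cases hj : c j = 0
  · simp only [hj, zero_nsmul]
  · rw [h j hj]

variable [PartialOrder M] [IsOrderedCancelAddMonoid M]

theorem le_of_sum_nsmul_le_two_nsmul {c : ι → ℕ} {a : ι → M} (ha : ∀ j, 0 ≤ a j) {i j : ι}
    (hi : c i ≠ 0) (hj : c j ≠ 0) (hsum : ∑ k, c k • a k ≤ 2 • a i) : a j ≤ a i := by
  obtain rfl | hij := eq_or_ne i j
  · exact le_rfl
  refine le_of_add_le_add_left (a := a i) ?_
  calc
    a i + a j ≤ c i • a i + c j • a j :=
      add_le_add (le_self_nsmul (ha i) hi) (le_self_nsmul (ha j) hj)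
    _ ≤ ∑ k, c k • a k :=
      Finset.add_le_sum (fun k _ => nsmul_nonneg (ha k) (c k)) (Finset.mem_univ i)
        (Finset.mem_univ j) hij
    _ ≤ 2 • a i := hsum
    _ = a i + a i := two_nsmul (a i)

variable {b : ι → ι → ℕ} {a : ι → M}

theorem weight_eq_of_forall_sum_nsmul_le_two_nsmul (hdiag : ∀ i, 0 < b i i)
    (hsymm : ∀ i j, i ≠ j → (b i j ≠ 0 ↔ b j i ≠ 0)) (ha : ∀ i, 0 ≤ a i)
    (hsum : ∀ i, ∑ j, b i j • a j ≤ 2 • a i) (i j : ι) (hij : b i j ≠ 0) : a j = a i := by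
  obtain rfl | ne := eq_or_ne i j
  · rfl
  · exact le_antisymm (le_of_sum_nsmul_le_two_nsmul ha (hdiag i).ne' hij (hsum i))
      (le_of_sum_nsmul_le_two_nsmul ha (hdiag j).ne' ((hsymm i j ne).1 hij) (hsum j))

theorem forall_sum_nsmul_le_two_nsmul_iff (hdiag : ∀ i, 0 < b i i)
    (hsymm : ∀ i j, i ≠ j → (b i j ≠ 0 ↔ b j i ≠ 0)) (hpos : ∀ i, 0 < a i) :
    (∀ i, ∑ j, b i j • a j ≤ 2 • a i) ↔
      (∀ i j, b i j ≠ 0 → a j = a i) ∧ ∀ i, ∑ j, b i j ≤ 2 := by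
  have row_iff (hweight : ∀ i j, b i j ≠ 0 → a j = a i) (i : ι) :
      ∑ j, b i j • a j ≤ 2 • a i ↔ ∑ j, b i j ≤ 2 := by
    rw [sum_nsmul_eq_sum_nsmul_of_forall_ne_zero (hweight i),
      (nsmul_left_strictMono (hpos i)).le_iff_le]
  constructor
  · intro h
    have hweight :=
      weight_eq_of_forall_sum_nsmul_le_two_nsmul hdiag hsymm (fun i => (hpos i).le) h
    exact ⟨hweight, fun i => (row_iff hweight i).1 (h i)⟩
  · rintro ⟨hweight, hsum⟩ i
    exact (row_iff hweight i).2 (hsum i)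

theorem matrix_two_generation_lemma_general (hdiag : ∀ i, 0 < b i i)
    (hsymm : ∀ i j, i ≠ j → (b i j ≠ 0 ↔ b j i ≠ 0)) (hpos : ∀ i, 0 < a i) :
    ((∀ i, ∑ j, b i j • a j ≤ 2 • a i) ↔
      ∀ i, IsIsolated b i ∨ ∃! i', IsTwin b a i i') ∧
    ((∀ i, IsIsolated b i ∨ ∃! i', IsTwin b a i i') → ∀ i, ∑ j, b i j ≤ 2) ∧
    ((∀ i j, a i = a j) → (∀ i, ∑ j, b i j ≤ 2) → ∀ i, ∑ j, b i j • a j ≤ 2 • a i) := by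
  have bound_iff := forall_sum_nsmul_le_two_nsmul_iff hdiag hsymm hpos
  have pattern_iff := forall_isolated_or_existsUnique_twin_iff (a := a) hdiag hsymm
  exact ⟨bound_iff.trans pattern_iff.symm, fun h => (pattern_iff.1 h).2,
    fun hconst hsum => bound_iff.2 ⟨fun i j _ => hconst j i, hsum⟩⟩

end Weights

/-- Let `b` be an `n × n` matrix over `ℕ` with positive diagonal
entries, such that for `i ≠ j` the entry `b i j` vanishes iff `b j i` does.  Let `a`
be a vector of positive natural numbers and `a' = B·a` (so `a' i = Σ_j b i j * a j`).
Consider the assertions: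
(1) `a' i ≤ 2 * a i` for all `i`;
(2) for each `i`, either `b i i ≤ 2` and `b i j = 0` for all `j ≠ i`, or there is a
    unique index `i' ≠ i` with `a i = a i'`,
    `b i i = b i i' = b i' i = b i' i' = 1` and `b i j = 0` for `j ∉ {i, i'}`;
(3) `Σ_j b i j ≤ 2` for all `i`.
Then (1) ↔ (2), (2) → (3), and if all `a i` are equal, (3) → (1). -/
theorem matrix_two_generation_lemma (n : ℕ) (b : Fin n → Fin n → ℕ) (a : Fin n → ℕ)
    (hdiag : ∀ i, 0 < b i i)
    (hsymm : ∀ i j, i ≠ j → (b i j ≠ 0 ↔ b j i ≠ 0))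
    (hpos : ∀ i, 0 < a i) :
    ((∀ i, ∑ j, b i j * a j ≤ 2 * a i) ↔
      (∀ i, (b i i ≤ 2 ∧ ∀ j, j ≠ i → b i j = 0) ∨
        (∃! i' : Fin n, i' ≠ i ∧ a i = a i' ∧
          b i i = 1 ∧ b i i' = 1 ∧ b i' i = 1 ∧ b i' i' = 1 ∧
          ∀ j, j ≠ i → j ≠ i' → b i j = 0))) ∧
    ((∀ i, (b i i ≤ 2 ∧ ∀ j, j ≠ i → b i j = 0) ∨
        (∃! i' : Fin n, i' ≠ i ∧ a i = a i' ∧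
          b i i = 1 ∧ b i i' = 1 ∧ b i' i = 1 ∧ b i' i' = 1 ∧
          ∀ j, j ≠ i → j ≠ i' → b i j = 0)) →
      ∀ i, ∑ j, b i j ≤ 2) ∧
    ((∀ i j, a i = a j) → (∀ i, ∑ j, b i j ≤ 2) → ∀ i, ∑ j, b i j * a j ≤ 2 * a i) :=
  matrix_two_generation_lemma_general hdiag hsymm hpos
end

section
/- Let A be a semilocal ring with Jacobson radical J, and let G be a finite group acting on A via a datum (φ, ω) with |G| invertible in A. Then the crossed product A[G,(φ,ω)] is semilocal and its Jacobson radical equals J[G,(φ,ω)] = {Σ_{g∈G} a_g[g] : a_g ∈ J for all g}, i.e. the set of elements all of whose coefficients lie in J. -/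
/-!
Statement 14: Let `A` be a semilocal ring with Jacobson radical `J`, and let `G` be
a finite group acting on `A` via a datum `(φ, ω)` with `|G|` invertible in `A`.
Then the crossed product `A[G, (φ, ω)]` is semilocal and its Jacobson radical is
`J[G, (φ, ω)]`, i.e. the set of elements all of whose coefficients lie in `J`.
-/

universe u v w


/-- The Jacobson radical of a ring: the intersection of its maximal left ideals. -/
def jacobsonRadical (R : Type*) [Ring R] : Ideal R :=
  sInf {I : Ideal R | I.IsMaximal}

/-- A ring `R` is semilocal if `R/rad(R)` is artinian. -/
def IsSemilocalRing (R : Type*) [Ring R] : Prop :=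
  IsArtinian R (R ⧸ jacobsonRadical R)

/-!
Each element of `B` is also uniquely `∑ g, [g] a_g`, and for a left ideal `I` of `A` the left ideal
`B I` consists of those elements whose right coefficients `a_g` lie in `I`. For `I = J` right and
left coefficients may be exchanged, because `J` is stable under automorphisms, so `J[G] = B J`.

Since `B` is finite over `A`, every maximal left ideal of `B` lies in a maximal left `A`-submodule,
which contains `J B`; hence `B J = J B ⊆ rad B`. So `B / rad B` is a finite module over the artinian
ring `A / J`.

Conversely, for a maximal left ideal `M` of `A` the `A`-module `B / B M` is a finite sum of twists
of the simple module `A / M`. Maschke's averaging argument makes it semisimple over `B`, so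
`rad B ⊆ B M`, and intersecting over all `M` gives `rad B ⊆ B J`.
-/

theorem jacobsonRadical_eq_jacobson (R : Type*) [Ring R] : jacobsonRadical R = Ring.jacobson R :=
  (Ring.jacobson_eq_sInf_isMaximal R).symm

theorem ringEquiv_apply_mem_jacobson_iff {R S : Type*} [Ring R] [Ring S] (e : R ≃+* S) {r : R} :
    e r ∈ Ring.jacobson S ↔ r ∈ Ring.jacobson R := by
  have : RingHomSurjective (e : R →+* S) := ⟨e.surjective⟩
  exact SetLike.ext_iff.mp
    (Module.comap_jacobson_of_bijective (f := (e : R →+* S).toSemilinearMap) e.bijective) r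

section FiniteExtension

variable {R S V : Type*} [Ring R] [Ring S] [AddCommGroup V] [Module R V]

theorem exists_surjective_pi_quotient {ι : Type*} [Finite ι] {v : ι → V}
    (hv : Submodule.span R (Set.range v) = ⊤) {I : ι → Ideal R}
    (hI : ∀ i, ∀ r ∈ I i, r • v i = 0) :
    ∃ f : (∀ i, R ⧸ I i) →ₗ[R] V, Function.Surjective f := by
  classical
  cases nonempty_fintype ι
  let f : (∀ i, R ⧸ I i) →ₗ[R] V := LinearMap.lsum R (fun i => R ⧸ I i) ℕ fun i =>
    (I i).liftQ (LinearMap.toSpanSingleton R V (v i)) (hI i)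
  refine ⟨f, LinearMap.range_eq_top.mp (top_unique (hv ▸ Submodule.span_le.mpr ?_))⟩
  rintro _ ⟨i, rfl⟩
  refine ⟨Pi.single i (Submodule.Quotient.mk 1), ?_⟩
  calc f (Pi.single i (Submodule.Quotient.mk 1)) = (1 : R) • v i := LinearMap.lsum_piSingle ..
    _ = v i := one_smul R _

theorem le_jacobson_of_restrictScalars_le_jacobson [SMul R S] [Module S V] [IsScalarTower R S V]
    [Module.Finite R V] {K : Submodule S V} (hK : K.restrictScalars R ≤ Module.jacobson R V) :
    K ≤ Module.jacobson S V := by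
  refine le_sInf fun M hM => ?_
  have hM_ne_top : M.restrictScalars R ≠ ⊤ := by
    simpa only [ne_eq, Submodule.restrictScalars_eq_top_iff] using hM.1
  obtain ⟨N, hN, hMN⟩ := (eq_top_or_exists_le_coatom (M.restrictScalars R)).resolve_left hM_ne_top
  have hKN : K.restrictScalars R ≤ N := hK.trans (sInf_le hN)
  have hsup_ne_top : M ⊔ K ≠ ⊤ := fun htop => hN.1 <| top_unique <| by
    rw [← Submodule.restrictScalars_top R S V, ← htop, Submodule.restrictScalars_sup]
    exact sup_le hMN hKN
  exact sup_eq_left.mp (hM.le_iff.mp le_sup_left |>.resolve_left hsup_ne_top)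

theorem isSemilocalRing_of_finite [Module R S] [IsScalarTower R S S] [Module.Finite R S]
    (hJ : ∀ r ∈ Ring.jacobson R, r • (1 : S) ∈ Ring.jacobson S) (hR : IsSemilocalRing R) :
    IsSemilocalRing S := by
  rw [IsSemilocalRing, jacobsonRadical_eq_jacobson] at hR ⊢
  obtain ⟨s, hs⟩ := Module.Finite.fg_top (R := R) (M := S ⧸ Ring.jacobson S)
  have hJs : ∀ v : s, ∀ r ∈ Ring.jacobson R, r • (v : S ⧸ Ring.jacobson S) = 0 := by
    rintro ⟨v, -⟩ r hr
    obtain ⟨b, rfl⟩ := Submodule.Quotient.mk_surjective _ v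
    rw [← Submodule.Quotient.mk_smul, Submodule.Quotient.mk_eq_zero, ← one_mul b, ← smul_mul_assoc]
    exact Ideal.mul_mem_right _ _ (hJ r hr)
  obtain ⟨f, hf⟩ := exists_surjective_pi_quotient (by simpa using hs) hJs
  exact isArtinian_of_tower R (isArtinian_of_surjective _ f hf)

end FiniteExtension

namespace IsCrossedProduct

variable {A : Type u} [Ring A] {G : Type v} [Group G] [Fintype G] {D : CrossedSystem A G}
  {B : Type w} [Ring B] {ι : A →+* B} {u : G → Bˣ}

theorem existsUnique_right_coeff (hB : IsCrossedProduct D B ι u) (b : B) :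
    ∃! c : G → A, b = ∑ g, (u g : B) * ι (c g) := by
  refine ((Equiv.piCongrRight fun g => (D.φ g).toEquiv).existsUnique_congr fun c => ?_).mpr
    (hB.free b)
  simp [hB.u_comm]

theorem mem_map_iff (hB : IsCrossedProduct D B ι u) {I : Ideal A} {x : B} :
    x ∈ I.map ι ↔ ∃ c : G → A, (∀ g, c g ∈ I) ∧ x = ∑ g, (u g : B) * ι (c g) := by
  constructor
  · intro hx
    induction hx using Submodule.closure_induction with
    | zero => exact ⟨0, fun _ => I.zero_mem, by simp⟩
    | add x y _ _ hx hy =>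
      obtain ⟨c, hc, rfl⟩ := hx
      obtain ⟨d, hd, rfl⟩ := hy
      exact ⟨c + d, fun g => I.add_mem (hc g) (hd g), by simp [mul_add, Finset.sum_add_distrib]⟩
    | smul_mem b x hx =>
      obtain ⟨a, ha, rfl⟩ := hx
      obtain ⟨c, rfl, -⟩ := hB.existsUnique_right_coeff b
      exact ⟨fun g => c g * a, fun g => I.mul_mem_left _ ha, by simp [Finset.sum_mul, mul_assoc]⟩
  · rintro ⟨c, hc, rfl⟩
    exact sum_mem fun g _ => Ideal.mul_mem_left _ _ (Ideal.mem_map_of_mem ι (hc g))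

theorem sum_mem_map_iff (hB : IsCrossedProduct D B ι u) {I : Ideal A} {c : G → A} :
    ∑ g, (u g : B) * ι (c g) ∈ I.map ι ↔ ∀ g, c g ∈ I := by
  refine ⟨fun h => ?_, fun hc => hB.mem_map_iff.mpr ⟨c, hc, rfl⟩⟩
  obtain ⟨d, hd, hcd⟩ := hB.mem_map_iff.mp h
  exact (hB.existsUnique_right_coeff _).unique rfl hcd ▸ hd

theorem mem_map_jacobson_iff (hB : IsCrossedProduct D B ι u) {x : B} :
    x ∈ (Ring.jacobson A).map ι ↔
      ∃ c : G → A, (∀ g, c g ∈ Ring.jacobson A) ∧ x = ∑ g, ι (c g) * (u g : B) := by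
  rw [hB.mem_map_iff]
  refine (Equiv.piCongrRight fun g => (D.φ g).toEquiv).exists_congr fun c => ?_
  simp [hB.u_comm, ringEquiv_apply_mem_jacobson_iff]

section Maschke

variable {V W : Type*} [AddCommGroup V] [Module A V] [Module B V]
  [AddCommGroup W] [Module A W] [Module B W]

theorem inv_smul_apply_smul (hB : IsCrossedProduct D B ι u)
    (hV : ∀ (a : A) (v : V), a • v = ι a • v) (hW : ∀ (a : A) (w : W), a • w = ι a • w)
    (f : V →ₗ[A] W) (a : A) (g h : G) (v : V) :
    (↑(u g)⁻¹ : B) • f ((u g : B) • (ι a * u h) • v) =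
      (ι a * u h) • (↑(u (g * h))⁻¹ : B) • f ((u (g * h) : B) • v) := by
  have hmul : (u g : B) * (ι a * u h) = ι (D.φ g a * D.ω g h) * u (g * h) := by
    rw [← mul_assoc, hB.u_comm, mul_assoc, hB.u_mul, map_mul, mul_assoc]
  have hinv : (↑(u g)⁻¹ : B) * ι (D.φ g a * D.ω g h) = ι a * u h * ↑(u (g * h))⁻¹ := by
    rw [Units.inv_mul_eq_iff_eq_mul, ← mul_assoc, hmul, mul_assoc, Units.mul_inv, mul_one]
  rw [smul_smul, hmul, mul_smul, ← hV, map_smul, hW, smul_smul, hinv, mul_smul]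

/-- The trace `v ↦ ∑ g, [g]⁻¹ f ([g] v)` of an `A`-linear map `f` between `B`-modules, where `A`
acts through `ι`. It is not divided by `|G|`. -/
def trace (hB : IsCrossedProduct D B ι u)
    (hV : ∀ (a : A) (v : V), a • v = ι a • v) (hW : ∀ (a : A) (w : W), a • w = ι a • w)
    (f : V →ₗ[A] W) : V →ₗ[B] W where
  toFun v := ∑ g, (↑(u g)⁻¹ : B) • f ((u g : B) • v)
  map_add' v w := by simp only [smul_add, map_add, Finset.sum_add_distrib]
  map_smul' b v := by
    obtain ⟨c, rfl, -⟩ := hB.free b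
    simp only [Finset.sum_smul, RingHom.id_apply]
    simp only [Finset.smul_sum, map_sum]
    rw [Finset.sum_comm]
    refine Finset.sum_congr rfl fun h _ => ?_
    simp only [hB.inv_smul_apply_smul hV hW]
    exact Equiv.sum_comp (Equiv.mulRight h) fun k =>
      (ι (c h) * u h) • (↑(u k)⁻¹ : B) • f ((u k : B) • v)

theorem trace_apply_eq_card_nsmul (hB : IsCrossedProduct D B ι u)
    (hV : ∀ (a : A) (v : V), a • v = ι a • v) (hW : ∀ (a : A) (w : W), a • w = ι a • w)
    {f : V →ₗ[A] W} {i : W →ₗ[B] V} (hfi : ∀ w, f (i w) = w) (w : W) :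
    hB.trace hV hW f (i w) = Fintype.card G • w := by
  have hsummand (g : G) : (↑(u g)⁻¹ : B) • f ((u g : B) • i w) = w := by
    rw [← i.map_smul, hfi, smul_smul, Units.inv_mul, one_smul]
  simp [trace, hsummand]

theorem isSemisimpleModule_of_restrictScalars (hB : IsCrossedProduct D B ι u)
    (hn : IsUnit (Fintype.card G : A)) (hV : ∀ (a : A) (v : V), a • v = ι a • v)
    [IsSemisimpleModule A V] : IsSemisimpleModule B V := by
  let _ : Module A B := ι.toModule
  have : IsScalarTower A B V := ⟨fun a b v => by rw [hV, smul_smul]; rfl⟩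
  refine (isSemisimpleModule_iff B V).mpr ⟨fun P => ?_⟩
  obtain ⟨Q, hPQ⟩ := exists_isCompl (P.restrictScalars A)
  let π : V →ₗ[A] P := (P.restrictScalars A).projectionOnto Q hPQ
  have hπ (p : P) : π (P.subtype p) = p := Submodule.projectionOnto_apply_left hPQ p
  have hP (a : A) (p : P) : a • p = ι a • p := Subtype.ext (hV a p)
  let T : V →ₗ[B] P := hB.trace hV hP π
  have hT_bijective : Function.Bijective (T ∘ₗ P.subtype) := by
    have hTP : T ∘ₗ P.subtype = fun p : P => (Fintype.card G : A) • p := funext fun p =>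
      (hB.trace_apply_eq_card_nsmul hV hP hπ p).trans (Nat.cast_smul_eq_nsmul A _ p).symm
    exact hTP ▸ hn.smul_bijective
  let e : P ≃ₗ[B] P := .ofBijective _ hT_bijective
  exact ⟨_, LinearMap.isCompl_of_proj (f := e.symm ∘ₗ T) e.symm_apply_apply⟩

end Maschke

theorem span_range_units_eq_top (hB : IsCrossedProduct D B ι u) :
    let _ : Module A B := ι.toModule
    Submodule.span A (Set.range fun g => (u g : B)) = ⊤ := by
  let _ : Module A B := ι.toModule
  refine eq_top_iff.mpr fun b _ => ?_
  obtain ⟨c, rfl, -⟩ := hB.free b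
  exact sum_mem fun g _ => Submodule.smul_mem _ (c g) (Submodule.subset_span ⟨g, rfl⟩)

theorem module_finite (hB : IsCrossedProduct D B ι u) :
    let _ : Module A B := ι.toModule
    Module.Finite A B :=
  let _ : Module A B := ι.toModule
  .of_fg_top (Submodule.fg_def.mpr ⟨_, Set.finite_range _, hB.span_range_units_eq_top⟩)

theorem map_jacobson_le_jacobson (hB : IsCrossedProduct D B ι u) :
    (Ring.jacobson A).map ι ≤ Ring.jacobson B := by
  let _ : Module A B := ι.toModule
  have : IsScalarTower A B B := ⟨fun a => mul_assoc (ι a)⟩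
  have := hB.module_finite
  refine le_jacobson_of_restrictScalars_le_jacobson (R := A) fun x hx => ?_
  obtain ⟨c, hc, rfl⟩ := hB.mem_map_jacobson_iff.mp hx
  exact Ring.jacobson_smul_top_le A B <|
    sum_mem fun g _ => Submodule.smul_mem_smul (hc g) Submodule.mem_top

theorem isSemilocalRing (hB : IsCrossedProduct D B ι u) (hA : IsSemilocalRing A) :
    IsSemilocalRing B := by
  let _ : Module A B := ι.toModule
  have : IsScalarTower A B B := ⟨fun a => mul_assoc (ι a)⟩
  have := hB.module_finite
  refine isSemilocalRing_of_finite (fun a ha => ?_) hA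
  have hιa : a • (1 : B) = ι a := mul_one (ι a)
  exact hιa ▸ hB.map_jacobson_le_jacobson (Ideal.mem_map_of_mem ι ha)

theorem isSemisimpleModule_quotient_map (hB : IsCrossedProduct D B ι u)
    (hn : IsUnit (Fintype.card G : A)) (M : Ideal A) [M.IsMaximal] :
    IsSemisimpleModule B (B ⧸ M.map ι) := by
  let _ : Module A B := ι.toModule
  have : IsScalarTower A B B := ⟨fun a => mul_assoc (ι a)⟩
  let q : B →ₗ[A] B ⧸ M.map ι := (M.map ι).mkQ.restrictScalars A
  have hspan : Submodule.span A (Set.range fun g => q (u g)) = ⊤ := by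
    rw [Set.range_comp' q, ← Submodule.map_span, hB.span_range_units_eq_top, Submodule.map_top]
    exact LinearMap.range_eq_top.mpr (M.map ι).mkQ_surjective
  have htwist (g : G) (a : A) (ha : a ∈ M.comap (D.φ g).symm) : a • q (u g) = 0 := by
    have hcomm : a • (u g : B) = u g * ι ((D.φ g).symm a) := by
      rw [hB.u_comm, RingEquiv.apply_symm_apply]
      rfl
    rw [← map_smul, hcomm]
    exact (Submodule.Quotient.mk_eq_zero _).mpr
      (Ideal.mul_mem_left _ _ (Ideal.mem_map_of_mem ι ha))
  obtain ⟨f, hf⟩ := exists_surjective_pi_quotient hspan htwist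
  have (g : G) : IsSimpleModule A (A ⧸ M.comap (D.φ g).symm) :=
    isSimpleModule_iff_isCoatom.mpr (Ideal.comap_isMaximal_of_equiv (D.φ g).symm).out
  have : IsSemisimpleModule A (B ⧸ M.map ι) := .of_surjective f hf
  refine hB.isSemisimpleModule_of_restrictScalars hn fun a v => ?_
  obtain ⟨b, rfl⟩ := Submodule.Quotient.mk_surjective _ v
  rfl

theorem jacobson_eq_map_jacobson (hB : IsCrossedProduct D B ι u)
    (hn : IsUnit (Fintype.card G : A)) : Ring.jacobson B = (Ring.jacobson A).map ι := by
  refine le_antisymm (fun x hx => ?_) hB.map_jacobson_le_jacobson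
  obtain ⟨c, rfl, -⟩ := hB.existsUnique_right_coeff x
  refine hB.sum_mem_map_iff.mpr fun g => Submodule.mem_sInf.mpr fun (M : Ideal A) hM => ?_
  have : M.IsMaximal := ⟨hM⟩
  have := hB.isSemisimpleModule_quotient_map hn M
  have hle : Ring.jacobson B ≤ M.map ι :=
    Module.jacobson_le_of_eq_bot (IsSemisimpleModule.jacobson_eq_bot B _)
  exact hB.sum_mem_map_iff.mp (hle hx) g

end IsCrossedProduct

theorem crossedProduct_semilocal_and_radical_general
    {A : Type u} [Ring A] {G : Type v} [Group G] [Fintype G]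
    (D : CrossedSystem A G) (B : Type w) [Ring B] (ι : A →+* B) (u : G → Bˣ)
    (hB : IsCrossedProduct D B ι u) :
    (IsSemilocalRing A → IsSemilocalRing B) ∧
      (IsUnit ((Fintype.card G : ℕ) : A) → ∀ x : B, x ∈ jacobsonRadical B ↔
        ∃ c : G → A, (∀ g, c g ∈ jacobsonRadical A) ∧ x = ∑ g : G, ι (c g) * u g) := by
  refine ⟨hB.isSemilocalRing, fun hn x => ?_⟩
  rw [jacobsonRadical_eq_jacobson, jacobsonRadical_eq_jacobson, hB.jacobson_eq_map_jacobson hn,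
    hB.mem_map_jacobson_iff]

/-- Let `A` be a semilocal ring with Jacobson radical `J`, and
`G` a finite group acting on `A` via `(φ, ω)` with `|G|` invertible in `A`.  Then
the crossed product `B = A[G, (φ, ω)]` is semilocal, and its Jacobson radical is
`J[G, (φ, ω)] = {Σ_g a_g [g] | a_g ∈ J}`. -/
theorem crossedProduct_semilocal_and_radical
    {A : Type u} [Ring A] {G : Type v} [Group G] [Fintype G]
    (D : CrossedSystem A G) (B : Type w) [Ring B] (ι : A →+* B) (u : G → Bˣ)
    (hB : IsCrossedProduct D B ι u)
    (hA : IsSemilocalRing A) (hn : IsUnit ((Fintype.card G : ℕ) : A)) :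
    IsSemilocalRing B ∧
      ∀ x : B, x ∈ jacobsonRadical B ↔
        ∃ c : G → A, (∀ g, c g ∈ jacobsonRadical A) ∧ x = ∑ g : G, ι (c g) * u g :=
  (crossedProduct_semilocal_and_radical_general D B ι u hB).imp (· hA) (· hn)
end
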